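/- arXiv:0809.5023 — 10 statements merged into one kernel-verified Lean document; each statement's English description precedes it below -/
import Mathlib

section
/- Let V be a finite index set, let β_v > 0, p_v > 0, λ_v > 0 for v ∈ V with Σ_{v∈V} β_v = 1, and set λ̄ = Σ_v β_v λ_v and ζ = Σ_v β_v p_v. Assume 0 < λ̄ < e^{−1}, ζ < γ̄(λ̄), and λ_v < p_v e^{−γ̲(λ̄)} for every v ∈ V. Then the mean-field slotted-Aloha dynamical system is globally stable: for every solution (Q_{(v,k)}) whose initial condition has finite mean in every class (Σ_{k} k·Q_{(v,k)}(0) < ∞ for all v), one has, for every v ∈ V and k ∈ ℕ, lim_{τ→∞} Q_{(v,k)}(τ) = (1 − r_v) r_v^k where r_v = λ_v e^{γ̲(λ̄)} / p_v ∈ (0,1); in particular lim_{τ→∞} γ(τ) = γ̲(λ̄). -/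
/-! Global stability through an `L¹` Lyapunov functional on tails.

Let `T v k = 1 - ∑_{j<k} Q v j` be the tail probabilities, and let `r v ^ k` be those of the
geometric equilibrium, for which `∑ β p r = γlo`. For `E = T - r ^ ·`, and likewise for
`E = r ^ · - T`, the weighted positive part `∑_v β_v ∑_{k≥1} max (E v k) 0` is a Lyapunov
functional. Summing over `k`, the linear birth-death part of the equation telescopes to at most
`-p_v e^{-γ} max (E v 1) 0` (`sum_bound`), and the discrepancy between `e^{-γ}` and `e^{-γlo}`
contributes at most `p_v r_v |e^{-γ} - e^{-γlo}|`, and only when it has the unfavourable sign.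
After summing over `v`, with `Γ = ∑ β p max (E v 1) 0`, one is left with
`-e^{-γ} Γ + max (± (e^{-γlo} - e^{-γ})) 0 * γlo`. This is at most `-c Γ` for some `c > 0`,
because `x e^{-x} - γlo e^{-γlo}` is positive at least linearly in `x - γlo` on `(γlo, ζ]`, where
`ζ < γhi` is used (`upper_scalar`), and negative at least linearly on `[0, γlo)`
(`lower_scalar`).

Since the functional is finite at time `0` (this is where the finite means enter), `∫ Γ` is
bounded for both signs (`core`). There the sum over `k` is truncated, and the boundary term
vanishes by dominated convergence, so finiteness of the means need not be propagated in time.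
Hence `∫ ∑ β p |T v 1 - r v| < ∞`, and as the integrand is Lipschitz it tends to `0`
(`barbalat`). This gives the limits of `Q v 0` and of `γ`; the equation for `Q v k` and
`barbalat` once more then give the limit of `Q v (k+1)` from those of `Q v k` and `Q v (k-1)`. -/

open Filter Set Real

/-- `γ(τ) = Σ_v β_v p_v (1 − Q_{(v,0)}(τ))`. -/
noncomputable def gammaFn {V : Type*} [Fintype V] (β p : V → ℝ)
    (Q : V → ℕ → ℝ → ℝ) (τ : ℝ) : ℝ :=
  ∑ v, β v * p v * (1 - Q v 0 τ)

/-- A solution of the mean-field slotted-Aloha dynamical system: a family of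
functions `Q v k : [0,∞) → [0,1]` summing to `1` over `k`, satisfying the
Kolmogorov ODEs on `[0,∞)`. -/
def IsMFSolution {V : Type*} [Fintype V] (β p lam : V → ℝ)
    (Q : V → ℕ → ℝ → ℝ) : Prop :=
  (∀ v k τ, 0 ≤ τ → Q v k τ ∈ Set.Icc (0:ℝ) 1) ∧
  (∀ v τ, 0 ≤ τ → HasSum (fun k => Q v k τ) 1) ∧
  (∀ v k τ, 0 ≤ τ → HasDerivWithinAt (Q v k)
    (lam v * ((if k = 0 then 0 else Q v (k-1) τ) - Q v k τ)
      + p v * Real.exp (-(gammaFn β p Q τ)) *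
        (Q v (k+1) τ - (if k = 0 then 0 else Q v k τ)))
    (Set.Ici (0:ℝ)) τ)

/-! ### Real-variable tools -/

/-- A form of Barbalat's lemma. If `f` converges and `f' = u + e` with `u` Lipschitz and `e → c`,
then `u → -c`: by the mean value theorem, `u + e` is small somewhere in each late interval of a
fixed short length `h`, and `u` varies by at most `M * h` there. -/
theorem barbalat {f u e : ℝ → ℝ} {M c L : ℝ} (hM : 0 < M)
    (hf : ∀ t, 0 < t → HasDerivAt f (u t + e t) t)
    (hu : ∀ s t, 0 ≤ s → s ≤ t → |u t - u s| ≤ M * (t - s))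
    (he : Tendsto e atTop (nhds c)) (hL : Tendsto f atTop (nhds L)) :
    Tendsto u atTop (nhds (-c)) := by
  rw [Metric.tendsto_atTop] at *
  intro ε hε
  set h := ε / (4 * M) with hh
  have hpos : 0 < h := by positivity
  have hMh : M * h = ε / 4 := by rw [hh]; field_simp
  obtain ⟨T₁, h₁⟩ := he (ε / 4) (by positivity)
  obtain ⟨T₂, h₂⟩ := hL (ε * h / 8) (by positivity)
  refine ⟨max 1 (max T₁ T₂), fun t ht => ?_⟩
  have ht0 : 1 ≤ t := le_trans (le_max_left _ _) ht
  have ht1 : T₁ ≤ t := le_trans (le_trans (le_max_left _ _) (le_max_right _ _)) ht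
  have ht2 : T₂ ≤ t := le_trans (le_trans (le_max_right _ _) (le_max_right _ _)) ht
  obtain ⟨ξ, hξ, hs⟩ := exists_hasDerivAt_eq_slope f (fun s => u s + e s)
    (show t < t + h by linarith)
    (fun s hs => (hf s (by linarith [hs.1])).continuousAt.continuousWithinAt)
    (fun s hs => hf s (by linarith [hs.1]))
  have e1 := h₁ ξ (by linarith [hξ.1])
  have f1 := h₂ t ht2
  have f2 := h₂ (t + h) (by linarith)
  have u1 := hu t ξ (by linarith) hξ.1.le
  have u2 : M * (ξ - t) ≤ ε / 4 := by
    rw [← hMh]; exact mul_le_mul_of_nonneg_left (by linarith [hξ.2]) hM.le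
  rw [Real.dist_eq, abs_lt] at *
  rw [abs_le] at u1
  have hs' : (u ξ + e ξ) * h = f (t + h) - f t := by
    rw [hs]; rw [add_sub_cancel_left]; field_simp
  have b1 : u ξ + e ξ ≤ ε / 4 := by
    by_contra hc; push Not at hc
    have := mul_lt_mul_of_pos_right hc hpos
    linarith
  have b2 : -(ε / 4) ≤ u ξ + e ξ := by
    by_contra hc; push Not at hc
    have := mul_lt_mul_of_pos_right hc hpos
    linarith
  constructor <;> linarith

/-- The positive part of a right-differentiable function is right-differentiable, with derivative
`σ * d`, where `σ` is a subgradient of `max · 0` at `E t`. -/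
theorem max_rightDeriv {E : ℝ → ℝ} {d t : ℝ} (h : HasDerivWithinAt E d (Ioi t) t) :
    ∃ σ : ℝ, 0 ≤ σ ∧ σ ≤ 1 ∧ σ * E t = max (E t) 0 ∧
      HasDerivWithinAt (fun s => max (E s) 0) (σ * d) (Ioi t) t := by
  have hc : ContinuousWithinAt E (Ioi t) t := h.continuousWithinAt
  rcases lt_trichotomy (E t) 0 with h0 | h0 | h0
  · refine ⟨0, le_rfl, zero_le_one, by simp [h0.le], ?_⟩
    rw [zero_mul]
    refine (hasDerivWithinAt_const t (Ioi t) (0:ℝ)).congr_of_eventuallyEq ?_ (max_eq_right h0.le)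
    filter_upwards [hc.eventually (gt_mem_nhds h0)] with s hs using max_eq_right hs.le
  · rcases le_or_gt d 0 with hd | hd
    · refine ⟨0, le_rfl, zero_le_one, by simp [h0], ?_⟩
      rw [hasDerivWithinAt_iff_tendsto_slope' (by simp)] at h ⊢
      have hm : Tendsto (fun s => max (slope E t s) 0) (nhdsWithin t (Ioi t)) (nhds (max d 0)) :=
        h.max tendsto_const_nhds
      rw [max_eq_right hd] at hm
      rw [zero_mul]
      refine hm.congr' ?_
      filter_upwards [self_mem_nhdsWithin] with s hs
      have hs' : (0:ℝ) ≤ (s - t)⁻¹ := inv_nonneg.2 (sub_nonneg.2 (le_of_lt hs))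
      simp only [slope_def_module, h0, smul_eq_mul, max_self, sub_zero]
      rw [mul_max_of_nonneg _ _ hs', mul_zero]
    · refine ⟨1, zero_le_one, le_rfl, by simp [h0], ?_⟩
      rw [hasDerivWithinAt_iff_tendsto_slope' (by simp)] at h ⊢
      have hm : Tendsto (fun s => max (slope E t s) 0) (nhdsWithin t (Ioi t)) (nhds (max d 0)) :=
        h.max tendsto_const_nhds
      rw [max_eq_left hd.le] at hm
      rw [one_mul]
      refine hm.congr' ?_
      filter_upwards [self_mem_nhdsWithin] with s hs
      have hs' : (0:ℝ) ≤ (s - t)⁻¹ := inv_nonneg.2 (sub_nonneg.2 (le_of_lt hs))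
      simp only [slope_def_module, h0, smul_eq_mul, max_self, sub_zero]
      rw [mul_max_of_nonneg _ _ hs', mul_zero]
  · refine ⟨1, zero_le_one, le_rfl, by simp [h0.le], ?_⟩
    rw [one_mul]
    refine h.congr_of_eventuallyEq ?_ (max_eq_left h0.le)
    filter_upwards [hc.eventually (lt_mem_nhds h0)] with s hs using max_eq_left hs.le

/-! ### Algebraic dissipation estimates -/

/-- Telescoping estimate for the birth-death equation: with `σ k` a subgradient of the positive
part at `E (k+1)`, only the boundary terms at `1` and `K + 1` and the forcing `a` survive. -/
theorem sum_bound {l μ a r : ℝ} (hl : 0 ≤ l) (hμ : 0 ≤ μ) (hr0 : 0 ≤ r) (hr1 : r ≤ 1)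
    (E σ : ℕ → ℝ) (hE0 : E 0 = 0) (K : ℕ)
    (h0 : ∀ k, 0 ≤ σ k) (h1 : ∀ k, σ k ≤ 1) (hσ : ∀ k, σ k * E (k+1) = max (E (k+1)) 0) :
    ∑ k ∈ Finset.range K, σ k * (l * (E k - E (k+1)) - μ * (E (k+1) - E (k+2))
      + a * (r ^ (k+1) * (1 - r)))
    ≤ - μ * max (E 1) 0 + μ * max (E (K+1)) 0 + max a 0 * r := by
  have hle : ∀ k j, σ k * E j ≤ max (E j) 0 := by
    intro k j
    rcases le_total (E j) 0 with h | h
    · rw [max_eq_right h]; exact mul_nonpos_of_nonneg_of_nonpos (h0 k) h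
    · rw [max_eq_left h]; nlinarith [h1 k]
  have key : ∀ K, ∑ k ∈ Finset.range K, σ k * (l * (E k - E (k+1)) - μ * (E (k+1) - E (k+2))
      + a * (r ^ (k+1) * (1 - r)))
    ≤ - l * max (E K) 0 - μ * max (E 1) 0 + μ * max (E (K+1)) 0 + max a 0 * (r - r ^ (K+1)) := by
    intro K
    induction K with
    | zero => simp [hE0]
    | succ K ih =>
      rw [Finset.sum_range_succ]
      have g : 0 ≤ r ^ (K+1) * (1 - r) := mul_nonneg (pow_nonneg hr0 _) (by linarith)
      have a1 : σ K * a ≤ max a 0 := by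
        rcases le_total a 0 with h | h
        · rw [max_eq_right h]; exact mul_nonpos_of_nonneg_of_nonpos (h0 K) h
        · rw [max_eq_left h]; nlinarith [h1 K]
      have a2 := mul_le_mul_of_nonneg_right a1 g
      have b1 := mul_le_mul_of_nonneg_left (hle K K) hl
      have b2 := mul_le_mul_of_nonneg_left (hle K (K+2)) hμ
      have e := hσ K
      have e1 : σ K * (l * (E K - E (K+1)) - μ * (E (K+1) - E (K+2)) + a * (r ^ (K+1) * (1 - r)))
        = l * (σ K * E K) - l * (σ K * E (K+1)) - μ * (σ K * E (K+1)) + μ * (σ K * E (K+2))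
          + σ K * a * (r ^ (K+1) * (1 - r)) := by ring
      rw [e1, e]
      have : r ^ (K+1+1) = r ^ (K+1) * r := pow_succ _ _
      rw [this, show K+1+1 = K+2 from rfl]
      nlinarith
  refine (key K).trans ?_
  have : 0 ≤ l * max (E K) 0 := mul_nonneg hl (le_max_right _ _)
  have : 0 ≤ max a 0 * r ^ (K+1) := mul_nonneg (le_max_right _ _) (pow_nonneg hr0 _)
  linarith

/-- The bound on the net dissipation when the tails exceed the equilibrium ones. The linear lower
bound on `x * exp (-x) - lo * exp (-lo)` for `x ∈ [lo, ζ]` comes from strict concavity of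
`log x - x`, the logarithm of `x * exp (-x)`, which takes equal values at `lo` and `hi > ζ`. -/
theorem upper_scalar {lo hi ζ : ℝ} (hlo : 0 < lo) (h1 : lo < 1) (hhi : 1 < hi)
    (heq : lo * exp (-lo) = hi * exp (-hi)) (hζ : ζ < hi) (hloζ : lo < ζ) :
    ∃ c > 0, ∀ γ Γ, γ ≤ lo + Γ → 0 ≤ Γ → lo + Γ ≤ ζ →
      -exp (-γ) * Γ + max (exp (-lo) - exp (-γ)) 0 * lo ≤ - c * Γ := by
  have hζ0 : 0 < ζ := by linarith
  have hlog : Real.log lo - lo = Real.log hi - hi := by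
    have := congrArg Real.log heq
    rwa [Real.log_mul hlo.ne' (exp_ne_zero _), Real.log_mul (by linarith) (exp_ne_zero _),
      Real.log_exp, Real.log_exp, ← sub_eq_add_neg, ← sub_eq_add_neg] at this
  set δ := (Real.log ζ - ζ) - (Real.log lo - lo) with hδ
  have hδ0 : 0 < δ := by
    have := strictConcaveOn_log_Ioi.slope_anti_adjacent (x := lo) (y := ζ) (z := hi)
      hlo (show (0:ℝ) < hi by linarith) hloζ hζ
    rw [div_lt_div_iff₀ (by linarith) (by linarith)] at this
    nlinarith
  set c₁ := lo * exp (-lo) * (δ / (ζ - lo))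
  have hc1 : 0 < c₁ := by have : 0 < ζ - lo := by linarith
                          positivity
  have hconv : ∀ Γ, 0 ≤ Γ → lo + Γ ≤ ζ →
      c₁ * Γ ≤ (lo + Γ) * exp (-(lo + Γ)) - lo * exp (-lo) := by
    intro Γ h0 h2
    have hx : 0 < lo + Γ := by linarith
    have g1 : δ / (ζ - lo) * Γ ≤ (Real.log (lo + Γ) - (lo + Γ)) - (Real.log lo - lo) := by
      rcases eq_or_lt_of_le h0 with rfl | h0
      · simp
      rcases eq_or_lt_of_le h2 with h2 | h2
      · have : Γ = ζ - lo := by linarith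
        rw [h2, this, div_mul_cancel₀ _ (by linarith)]
      have := strictConcaveOn_log_Ioi.slope_anti_adjacent (x := lo) (y := lo + Γ) (z := ζ)
        hlo hζ0 (by linarith) h2
      rw [div_lt_div_iff₀ (by linarith) (by linarith)] at this
      rw [div_mul_eq_mul_div, div_le_iff₀ (by linarith)]
      nlinarith
    have e1 : (lo + Γ) * exp (-(lo + Γ)) = lo * exp (-lo) *
        exp ((Real.log (lo + Γ) - (lo + Γ)) - (Real.log lo - lo)) := by
      rw [show (Real.log (lo + Γ) - (lo + Γ)) - (Real.log lo - lo)
        = Real.log (lo+Γ) + -(lo+Γ) - Real.log lo - (-lo) by ring,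
        Real.exp_sub, Real.exp_sub, Real.exp_add, Real.exp_log hx, Real.exp_log hlo]
      field_simp
    have e2 := Real.add_one_le_exp ((Real.log (lo + Γ) - (lo + Γ)) - (Real.log lo - lo))
    have hk : 0 < lo * exp (-lo) := by positivity
    rw [e1]
    have := mul_le_mul_of_nonneg_left ((add_le_add g1 le_rfl).trans e2) hk.le
    have e3 : c₁ * Γ = lo * exp (-lo) * (δ / (ζ - lo) * Γ + 1) - lo * exp (-lo) := by
      simp only [c₁]; ring
    rw [e3]; linarith
  refine ⟨min c₁ (exp (-lo)), lt_min hc1 (exp_pos _), fun γ Γ hγ h0 h2 => ?_⟩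
  rcases le_total γ lo with h | h
  · have : exp (-lo) ≤ exp (-γ) := exp_le_exp.2 (by linarith)
    rw [max_eq_right (by linarith)]
    have := mul_le_mul_of_nonneg_right (le_trans (min_le_right c₁ _) this) h0
    linarith
  · have a1 : exp (-γ) ≤ exp (-lo) := exp_le_exp.2 (by linarith)
    have a2 : exp (-(lo+Γ)) ≤ exp (-γ) := exp_le_exp.2 (by linarith)
    rw [max_eq_left (by linarith)]
    have := mul_le_mul_of_nonneg_right (min_le_left c₁ (exp (-lo))) h0
    have := hconv Γ h0 h2
    nlinarith

/-- The bound on the net dissipation when the tails lie below the equilibrium ones; the constant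
`exp (-lo) * (1 - lo)` is the derivative of `x * exp (-x)` at `lo`. -/
theorem lower_scalar {lo ζ : ℝ} (h1 : lo < 1) :
    ∃ c > 0, ∀ γ Γ, lo - Γ ≤ γ → γ ≤ ζ → 0 ≤ Γ → Γ ≤ lo →
      -exp (-γ) * Γ + max (exp (-γ) - exp (-lo)) 0 * lo ≤ - c * Γ := by
  set c₁ := exp (-lo) * (1 - lo)
  have hc1 : 0 < c₁ := mul_pos (exp_pos _) (by linarith)
  refine ⟨min c₁ (exp (-ζ)), lt_min hc1 (exp_pos _), fun γ Γ hγ hγζ h0 h2 => ?_⟩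
  rcases le_total lo γ with h | h
  · have : exp (-γ) ≤ exp (-lo) := exp_le_exp.2 (by linarith)
    rw [max_eq_right (by linarith)]
    have h3 : exp (-ζ) ≤ exp (-γ) := exp_le_exp.2 (by linarith)
    have := mul_le_mul_of_nonneg_right (le_trans (min_le_right c₁ _) h3) h0
    linarith
  · have a1 : exp (-lo) ≤ exp (-γ) := exp_le_exp.2 (by linarith)
    have a2 : exp (-γ) ≤ exp (-lo) * exp Γ := by rw [← exp_add]; exact exp_le_exp.2 (by linarith)
    rw [max_eq_left (by linarith)]
    have := mul_le_mul_of_nonneg_right (min_le_left c₁ (exp (-ζ))) h0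
    -- `exp Γ ≤ 1 / (1 - Γ)`
    have a3 : exp Γ * (1 - Γ) ≤ 1 := by
      have := Real.add_one_le_exp (-Γ)
      calc exp Γ * (1 - Γ) ≤ exp Γ * exp (-Γ) :=
            mul_le_mul_of_nonneg_left (by linarith) (exp_pos _).le
        _ = 1 := by rw [← exp_add]; simp
    have a5 : (lo - Γ) * exp Γ ≤ lo - Γ * (1 - lo) := by
      have q1 : lo - Γ ≤ (1 - Γ) * (lo - Γ * (1 - lo)) := by nlinarith [mul_nonneg (mul_nonneg h0 h0) (sub_nonneg.2 h1.le)]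
      have q2 : 0 ≤ lo - Γ * (1 - lo) := by nlinarith
      have := mul_le_mul_of_nonneg_right q1 (exp_pos Γ).le
      nlinarith [mul_le_mul_of_nonneg_right a3 q2]
    have a4 : exp (-γ) * (lo - Γ) ≤ exp (-lo) * exp Γ * (lo - Γ) :=
      mul_le_mul_of_nonneg_right a2 (by linarith)
    have a6 := mul_le_mul_of_nonneg_left a5 (exp_pos (-lo)).le
    have : c₁ * Γ = exp (-lo) * (Γ * (1 - lo)) := by simp only [c₁]; ring
    nlinarith

/-! ### The Lyapunov estimate -/

/-- Integrated Lyapunov inequality. `E` stands for the deviation of the tails from equilibrium,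
with either sign, `m` for `e^{-γ}` and `a` for the correspondingly signed deviation of `m` from its
equilibrium value. The scalar inequality `hsc` turns the dissipation into `-c * Γ`. -/
theorem core {V : Type*} [Fintype V] {β p lam r C : V → ℝ} {m a : ℝ → ℝ}
    {E : V → ℕ → ℝ → ℝ} {c lo : ℝ}
    (hβ : ∀ v, 0 ≤ β v) (hp : ∀ v, 0 ≤ p v) (hlam : ∀ v, 0 ≤ lam v)
    (hr0 : ∀ v, 0 ≤ r v) (hr1 : ∀ v, r v ≤ 1) (hlo : ∑ v, β v * p v * r v = lo)
    (hcont : ∀ v k, Continuous (E v k)) (hE0 : ∀ v t, E v 0 t = 0)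
    (hle : ∀ v k t, E v k t ≤ 1) (hm0 : ∀ t, 0 ≤ m t) (hm1 : ∀ t, m t ≤ 1)
    (hder : ∀ v k t, 0 < t → HasDerivAt (E v (k+1))
      (lam v * (E v k t - E v (k+1) t) - p v * m t * (E v (k+1) t - E v (k+2) t)
        + p v * a t * (r v ^ (k+1) * (1 - r v))) t)
    (hlim : ∀ v t, Tendsto (fun k => max (E v k t) 0) atTop (nhds 0))
    (hC : ∀ v K, ∑ k ∈ Finset.range K, max (E v (k+1) 0) 0 ≤ C v)
    (hsc : ∀ t, -m t * (∑ v, β v * p v * max (E v 1 t) 0) + max (a t) 0 * lo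
      ≤ -c * (∑ v, β v * p v * max (E v 1 t) 0)) (τ : ℝ) (hτ : 0 ≤ τ) :
    c * ∫ t in (0:ℝ)..τ, ∑ v, β v * p v * max (E v 1 t) 0 ≤ ∑ v, β v * C v := by
  set Γ : ℝ → ℝ := fun t => ∑ v, β v * p v * max (E v 1 t) 0 with hΓ
  set ψ : ℕ → ℝ → ℝ := fun K t => ∑ v, β v * p v * max (E v (K+1) t) 0 with hψ
  have hΓc : Continuous Γ := by fun_prop
  have hψc : ∀ K, Continuous (ψ K) := fun K => by fun_prop
  have hψlim : Tendsto (fun K => ∫ t in (0:ℝ)..τ, ψ K t) atTop (nhds (∫ _ in (0:ℝ)..τ, (0:ℝ))) := by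
    refine intervalIntegral.tendsto_integral_filter_of_dominated_convergence
      (fun _ => ∑ v, β v * p v) ?_ ?_ ?_ ?_
    · exact Eventually.of_forall fun K => (hψc K).aestronglyMeasurable
    · refine Eventually.of_forall fun K => Eventually.of_forall fun t _ => ?_
      have h0 : ∀ v, 0 ≤ β v * p v := fun v => mul_nonneg (hβ v) (hp v)
      rw [Real.norm_of_nonneg (Finset.sum_nonneg fun v _ => mul_nonneg (h0 v) (le_max_right _ _))]
      refine Finset.sum_le_sum fun v _ => ?_
      exact mul_le_of_le_one_right (h0 v) (max_le (hle _ _ _) zero_le_one)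
    · exact intervalIntegrable_const
    · refine Eventually.of_forall fun t _ => ?_
      have : Tendsto (fun K => ψ K t) atTop (nhds (∑ v, β v * p v * 0)) :=
        tendsto_finsetSum _ fun v _ =>
          ((tendsto_add_atTop_iff_nat 1).2 (hlim v t)).const_mul _
      simpa using this
  have hmain : ∀ K, c * ∫ t in (0:ℝ)..τ, Γ t ≤ (∑ v, β v * C v) + ∫ t in (0:ℝ)..τ, ψ K t := by
    intro K
    -- The Lyapunov functional truncated at level `K`.
    set G : ℝ → ℝ := fun t => ∑ v, β v * ∑ k ∈ Finset.range K, max (E v (k+1) t) 0 with hG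
    have hGc : Continuous G := by fun_prop
    have hG0 : G 0 ≤ ∑ v, β v * C v :=
      Finset.sum_le_sum fun v _ => mul_le_mul_of_nonneg_left (hC v K) (hβ v)
    have hGτ : 0 ≤ G τ := Finset.sum_nonneg fun v _ =>
      mul_nonneg (hβ v) (Finset.sum_nonneg fun k _ => le_max_right _ _)
    have hd : ∀ t, ∃ d, t ∈ Ioo 0 τ → HasDerivWithinAt G d (Ioi t) t ∧ d ≤ -c * Γ t + ψ K t := by
      intro t
      by_cases ht : t ∈ Ioo 0 τ
      swap
      · exact ⟨0, fun h => absurd h ht⟩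
      choose σ s0 s1 s2 s3 using fun v k => max_rightDeriv (hder v k t ht.1).hasDerivWithinAt
      refine ⟨_, fun _ => ⟨HasDerivWithinAt.fun_sum fun v _ =>
        (HasDerivWithinAt.fun_sum fun k _ => s3 v k).const_mul (β v), ?_⟩⟩
      have hv : ∀ v, β v * ∑ k ∈ Finset.range K, σ v k *
          (lam v * (E v k t - E v (k+1) t) - p v * m t * (E v (k+1) t - E v (k+2) t)
          + p v * a t * (r v ^ (k+1) * (1 - r v))) ≤
          - m t * (β v * p v * max (E v 1 t) 0) + β v * p v * max (E v (K+1) t) 0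
            + max (a t) 0 * (β v * p v * r v) := by
        intro v
        have h := mul_le_mul_of_nonneg_left (sum_bound (hlam v) (mul_nonneg (hp v) (hm0 t))
          (a := p v * a t) (hr0 v) (hr1 v)
          (fun k => E v k t) (σ v) (hE0 v t) K (s0 v) (s1 v) (s2 v)) (hβ v)
        refine h.trans ?_
        have e1 : max (p v * a t) 0 = p v * max (a t) 0 := by
          rw [mul_max_of_nonneg _ _ (hp v), mul_zero]
        rw [e1]
        have : β v * p v * max (E v (K+1) t) 0 * m t ≤ β v * p v * max (E v (K+1) t) 0 :=
          mul_le_of_le_one_right (mul_nonneg (mul_nonneg (hβ v) (hp v)) (le_max_right _ _)) (hm1 t)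
        linarith
      refine (Finset.sum_le_sum fun v _ => hv v).trans ?_
      rw [Finset.sum_add_distrib, Finset.sum_add_distrib, ← Finset.mul_sum, ← Finset.mul_sum, hlo]
      have := hsc t
      simp only [hΓ, hψ]
      linarith
    choose G' hG' using hd
    have hφc : Continuous fun t => -c * Γ t + ψ K t := by fun_prop
    have := intervalIntegral.sub_le_integral_of_hasDeriv_right_of_le hτ hGc.continuousOn
      (fun t ht => (hG' t ht).1) (hφc.continuousOn.integrableOn_Icc) (fun t ht => (hG' t ht).2)
    rw [intervalIntegral.integral_add ((hΓc.const_mul _).intervalIntegrable _ _)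
      ((hψc K).intervalIntegrable _ _), intervalIntegral.integral_const_mul] at this
    linarith
  refine ge_of_tendsto' (x := atTop) ?_ hmain
  simpa using hψlim.const_add (∑ v, β v * C v)

/-- The sum of the tails of a probability distribution on `ℕ` is at most its mean. -/
theorem tail_moment {q : ℕ → ℝ} (h0 : ∀ k, 0 ≤ q k) (h1 : HasSum q 1)
    (h2 : Summable fun k : ℕ => (k:ℝ) * q k) (K : ℕ) :
    ∑ k ∈ Finset.range K, (1 - ∑ j ∈ Finset.range (k+1), q j) ≤ ∑' k : ℕ, (k:ℝ) * q k := by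
  have key : ∀ K : ℕ, ∑ k ∈ Finset.range K, (1 - ∑ j ∈ Finset.range (k+1), q j)
      = ∑ k ∈ Finset.range K, (k:ℝ) * q k + K * (1 - ∑ j ∈ Finset.range K, q j) := by
    intro K
    induction K with
    | zero => simp
    | succ K ih =>
      rw [Finset.sum_range_succ, ih, Finset.sum_range_succ, Finset.sum_range_succ]
      push_cast; ring
  rw [key, ← h2.sum_add_tsum_nat_add K]
  have : 1 - ∑ j ∈ Finset.range K, q j = ∑' j, q (j + K) := by
    rw [← h1.tsum_eq, ← h1.summable.sum_add_tsum_nat_add K]; ring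
  rw [this, ← tsum_mul_left]
  refine add_le_add le_rfl ?_
  refine Summable.tsum_le_tsum (fun j => ?_) (((summable_nat_add_iff K).2 h1.summable).mul_left _)
    ((summable_nat_add_iff K).2 h2)
  refine mul_le_mul_of_nonneg_right ?_ (h0 _)
  push_cast
  linarith [(Nat.cast_nonneg j : (0:ℝ) ≤ j)]

/-! ### Convergence -/

/-- Global stability for families `q` that are defined and continuous on the whole real line and
satisfy the system for positive times. -/
theorem stability_aux {V : Type*} [Fintype V] {β p lam : V → ℝ}
    (hβ : ∀ v, 0 < β v) (hp : ∀ v, 0 < p v) (hlam : ∀ v, 0 < lam v)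
    {γlo γhi : ℝ} (hlo0 : 0 < γlo) (hlo1 : γlo < 1) (hhi : 1 < γhi)
    (heq : γlo * exp (-γlo) = γhi * exp (-γhi)) (hζ : ∑ v, β v * p v < γhi)
    {r : V → ℝ} (hr0 : ∀ v, 0 < r v) (hr1 : ∀ v, r v < 1)
    (hlamr : ∀ v, lam v = p v * exp (-γlo) * r v)
    (hrlo : ∑ v, β v * p v * r v = γlo)
    {q : V → ℕ → ℝ → ℝ} (hqc : ∀ v k, Continuous (q v k))
    (hq0 : ∀ v k t, 0 ≤ q v k t) (hq1 : ∀ v k t, q v k t ≤ 1)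
    (hqs : ∀ v t, HasSum (fun k => q v k t) 1)
    (hqd : ∀ v k t, 0 < t → HasDerivAt (q v k)
      (lam v * ((if k = 0 then 0 else q v (k-1) t) - q v k t)
        + p v * exp (-(gammaFn β p q t)) *
          (q v (k+1) t - (if k = 0 then 0 else q v k t))) t)
    (hfin : ∀ v, Summable (fun k : ℕ => (k : ℝ) * q v k 0)) :
    (∀ v k, Tendsto (q v k) atTop (nhds ((1 - r v) * r v ^ k))) ∧
    Tendsto (gammaFn β p q) atTop (nhds γlo) := by
  have hbp : ∀ v, 0 < β v * p v := fun v => mul_pos (hβ v) (hp v)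
  set ζ := ∑ v, β v * p v with hζdef
  have hne : Nonempty V := by
    by_contra h
    rw [not_nonempty_iff] at h
    simp at hrlo
    linarith
  have hloζ : γlo < ζ := by
    rw [← hrlo]
    exact Finset.sum_lt_sum_of_nonempty Finset.univ_nonempty
      fun v _ => mul_lt_of_lt_one_right (hbp v) (hr1 v)
  have hq0def : ∀ t, gammaFn β p q t = ∑ v, β v * p v * (1 - q v 0 t) := fun t => rfl
  have hγ0 : ∀ t, 0 ≤ gammaFn β p q t := fun t =>
    Finset.sum_nonneg fun v _ => mul_nonneg (hbp v).le (by linarith [hq1 v 0 t])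
  have hγζ : ∀ t, gammaFn β p q t ≤ ζ := fun t =>
    Finset.sum_le_sum fun v _ => mul_le_of_le_one_right (hbp v).le (by linarith [hq0 v 0 t])
  set m : ℝ → ℝ := fun t => exp (-(gammaFn β p q t)) with hm
  have hm0 : ∀ t, 0 ≤ m t := fun t => (exp_pos _).le
  have hm1 : ∀ t, m t ≤ 1 := fun t => exp_le_one_iff.2 (by linarith [hγ0 t])
  -- The tail probabilities.
  set T : V → ℕ → ℝ → ℝ := fun v k t => 1 - ∑ j ∈ Finset.range k, q v j t with hT
  have hTsub : ∀ v k t, T v k t - T v (k+1) t = q v k t := fun v k t => by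
    simp only [hT, Finset.sum_range_succ]; ring
  have hTz : ∀ v t, T v 0 t = 1 := fun v t => by simp [hT]
  have hTc : ∀ v k, Continuous (T v k) := fun v k => by simp only [hT]; fun_prop
  have hT1 : ∀ v k t, T v k t ≤ 1 := fun v k t => by
    have := Finset.sum_nonneg fun j (_ : j ∈ Finset.range k) => hq0 v j t
    simp only [hT]; linarith
  have hT0 : ∀ v k t, 0 ≤ T v k t := fun v k t => by
    have := sum_le_hasSum (Finset.range k) (fun j _ => hq0 v j t) (hqs v t)
    simp only [hT]; linarith
  have hTlim : ∀ v t, Tendsto (fun k => T v k t) atTop (nhds 0) := fun v t => by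
    have := ((hqs v t).tendsto_sum_nat).const_sub 1
    simpa [hT] using this
  have hTd : ∀ v k t, 0 < t → HasDerivAt (T v (k+1))
      (lam v * q v k t - p v * m t * q v (k+1) t) t := by
    intro v k t ht
    have hs : ∀ k, HasDerivAt (fun t => ∑ j ∈ Finset.range (k+1), q v j t)
        (-(lam v * q v k t) + p v * m t * q v (k+1) t) t := by
      intro k
      induction k with
      | zero =>
        simp only [zero_add, Finset.range_one, Finset.sum_singleton]
        refine (hqd v 0 t ht).congr_deriv ?_
        simp [hm]
      | succ k ih =>
        simp_rw [Finset.sum_range_succ _ (k+1)]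
        refine (ih.fun_add (hqd v (k+1) t ht)).congr_deriv ?_
        simp [hm]; ring
    refine ((hs k).const_sub 1).congr_deriv ?_
    ring
  have hrlim : ∀ v, Tendsto (fun k => r v ^ k) atTop (nhds 0) := fun v =>
    tendsto_pow_atTop_nhds_zero_of_lt_one (hr0 v).le (hr1 v)
  -- Deviation of the tails above the equilibrium; it is finite initially by the finite means.
  obtain ⟨c₁, hc₁, hsc₁⟩ := upper_scalar hlo0 hlo1 hhi heq hζ hloζ
  have hup := core (c := c₁) (a := fun t => exp (-γlo) - m t) (m := m)
    (E := fun v k t => T v k t - r v ^ k) (C := fun v => ∑' k : ℕ, (k:ℝ) * q v k 0)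
    (fun v => (hβ v).le) (fun v => (hp v).le) (fun v => (hlam v).le) (fun v => (hr0 v).le)
    (fun v => (hr1 v).le) hrlo (fun v k => (hTc v k).sub continuous_const)
    (fun v t => by simp [hTz]) (fun v k t => by linarith [hT1 v k t, pow_nonneg (hr0 v).le k])
    hm0 hm1
    (fun v k t ht => ((hTd v k t ht).sub_const _).congr_deriv (by
      have h1 := hTsub v k t
      have h2 := hTsub v (k+1) t
      rw [← h1, ← h2, hlamr v]; ring))
    (fun v t => by
      refine squeeze_zero (fun k => le_max_right _ _) (fun k => ?_) (hTlim v t)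
      exact max_le (by linarith [pow_nonneg (hr0 v).le k]) (hT0 v k t))
    (fun v K => by
      refine le_trans (Finset.sum_le_sum fun k _ => ?_) (tail_moment (fun k => hq0 v k 0) (hqs v 0)
        (hfin v) K)
      exact max_le (by linarith [pow_nonneg (hr0 v).le (k+1)]) (hT0 v (k+1) 0))
    (fun t => by
      refine hsc₁ (gammaFn β p q t) _ ?_ ?_ ?_
      · rw [hq0def, ← hrlo, ← Finset.sum_add_distrib]
        refine Finset.sum_le_sum fun v _ => ?_
        rw [← mul_add]
        refine mul_le_mul_of_nonneg_left ?_ (hbp v).le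
        have := hTsub v 0 t
        rw [hTz] at this
        linarith [le_max_left (T v 1 t - r v ^ 1) 0, pow_one (r v)]
      · exact Finset.sum_nonneg fun v _ => mul_nonneg (hbp v).le (le_max_right _ _)
      · rw [← hrlo, ← Finset.sum_add_distrib]
        refine Finset.sum_le_sum fun v _ => ?_
        rw [← mul_add]
        refine mul_le_of_le_one_right (hbp v).le ?_
        rw [← le_sub_iff_add_le']
        exact max_le (by linarith [hT1 v 1 t, pow_one (r v)]) (by linarith [hr1 v]))
  -- Deviation below the equilibrium; it is dominated by the geometric series.
  obtain ⟨c₂, hc₂, hsc₂⟩ := lower_scalar (ζ := ζ) hlo1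
  have hdown := core (c := c₂) (a := fun t => m t - exp (-γlo)) (m := m)
    (E := fun v k t => r v ^ k - T v k t) (C := fun v => (1 - r v)⁻¹)
    (fun v => (hβ v).le) (fun v => (hp v).le) (fun v => (hlam v).le) (fun v => (hr0 v).le)
    (fun v => (hr1 v).le) hrlo (fun v k => continuous_const.sub (hTc v k))
    (fun v t => by simp [hTz])
    (fun v k t => by linarith [hT0 v k t, pow_le_one₀ (n := k) (hr0 v).le (hr1 v).le])
    hm0 hm1
    (fun v k t ht => ((hTd v k t ht).const_sub _).congr_deriv (by
      have h1 := hTsub v k t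
      have h2 := hTsub v (k+1) t
      rw [← h1, ← h2, hlamr v]; ring))
    (fun v t => by
      refine squeeze_zero (fun k => le_max_right _ _) (fun k => ?_) (hrlim v)
      exact max_le (by linarith [hT0 v k t]) (pow_nonneg (hr0 v).le k))
    (fun v K => by
      rw [← tsum_geometric_of_lt_one (hr0 v).le (hr1 v)]
      refine le_trans (Finset.sum_le_sum fun k _ => ?_)
        ((summable_geometric_of_lt_one (hr0 v).le (hr1 v)).sum_le_tsum (Finset.range K)
          fun k _ => pow_nonneg (hr0 v).le k)
      refine max_le ?_ (pow_nonneg (hr0 v).le k)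
      have : r v ^ (k+1) ≤ r v ^ k := pow_le_pow_of_le_one (hr0 v).le (hr1 v).le (Nat.le_succ k)
      linarith [hT0 v (k+1) 0])
    (fun t => by
      refine hsc₂ (gammaFn β p q t) _ ?_ (hγζ t) ?_ ?_
      · rw [hq0def, ← hrlo, ← Finset.sum_sub_distrib]
        refine Finset.sum_le_sum fun v _ => ?_
        rw [← mul_sub]
        refine mul_le_mul_of_nonneg_left ?_ (hbp v).le
        have := hTsub v 0 t
        rw [hTz] at this
        linarith [le_max_left (r v ^ 1 - T v 1 t) 0, pow_one (r v)]
      · exact Finset.sum_nonneg fun v _ => mul_nonneg (hbp v).le (le_max_right _ _)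
      · rw [← hrlo]
        refine Finset.sum_le_sum fun v _ => ?_
        refine mul_le_mul_of_nonneg_left ?_ (hbp v).le
        exact max_le (by linarith [hT0 v 1 t, pow_one (r v)]) (hr0 v).le)
  have hlip : ∀ v k s t, 0 ≤ s → s ≤ t → |q v k t - q v k s| ≤ (lam v + p v) * (t - s) := by
    intro v k s t hs hst
    rcases eq_or_lt_of_le hst with rfl | hst
    · simp
    obtain ⟨ξ, hξ, h⟩ := exists_hasDerivAt_eq_slope (q v k) _ hst (hqc v k).continuousOn
      (fun x hx => hqd v k x (by linarith [hx.1]))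
    have hts : 0 < t - s := by linarith
    rw [eq_div_iff hts.ne'] at h
    rw [← h, abs_mul, abs_of_pos hts]
    refine mul_le_mul_of_nonneg_right ?_ hts.le
    have hx : |(if k = 0 then 0 else q v (k-1) ξ) - q v k ξ| ≤ 1 := by
      rw [abs_le]
      split_ifs
      · constructor <;> linarith [hq0 v k ξ, hq1 v k ξ]
      · constructor <;> linarith [hq0 v k ξ, hq1 v k ξ, hq0 v (k-1) ξ, hq1 v (k-1) ξ]
    have hy : |q v (k+1) ξ - (if k = 0 then 0 else q v k ξ)| ≤ 1 := by
      rw [abs_le]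
      split_ifs
      · constructor <;> linarith [hq0 v (k+1) ξ, hq1 v (k+1) ξ]
      · constructor <;> linarith [hq0 v k ξ, hq1 v k ξ, hq0 v (k+1) ξ, hq1 v (k+1) ξ]
    refine (abs_add_le _ _).trans (add_le_add ?_ ?_)
    · rw [abs_mul, abs_of_pos (hlam v)]
      exact mul_le_of_le_one_right (hlam v).le hx
    · rw [abs_mul, abs_mul, abs_of_pos (hp v), abs_of_nonneg (hm0 ξ)]
      refine (mul_le_of_le_one_right (mul_nonneg (hp v).le (hm0 ξ)) hy).trans ?_
      exact mul_le_of_le_one_right (hp v).le (hm1 ξ)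
  -- The total deviation of the first tails is Lipschitz with bounded integral, so it vanishes.
  set G : ℝ → ℝ := fun t => ∑ v, β v * p v * |T v 1 t - r v| with hG
  have hGc : Continuous G := by fun_prop
  have hG0 : ∀ t, 0 ≤ G t := fun t =>
    Finset.sum_nonneg fun v _ => mul_nonneg (hbp v).le (abs_nonneg _)
  have hTq : ∀ v t, T v 1 t = 1 - q v 0 t := fun v t => by simp [hT]
  have hGlim : Tendsto G atTop (nhds 0) := by
    set F : ℝ → ℝ := fun t => ∫ s in (0:ℝ)..max t 0, G s with hF
    have hmono : Monotone F := by
      intro a b hab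
      have h1 : max a 0 ≤ max b 0 := max_le_max_right 0 hab
      exact intervalIntegral.integral_mono_interval le_rfl (le_max_right _ _) h1
        (Eventually.of_forall hG0) (hGc.intervalIntegrable _ _)
    have hbdd : BddAbove (range F) := by
      refine ⟨(∑ v, β v * ∑' k : ℕ, (k:ℝ) * q v k 0) / c₁ + (∑ v, β v * (1 - r v)⁻¹) / c₂, ?_⟩
      rintro _ ⟨t, rfl⟩
      have u := hup (max t 0) (le_max_right _ _)
      have d := hdown (max t 0) (le_max_right _ _)
      rw [mul_comm, ← le_div_iff₀ hc₁] at u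
      rw [mul_comm, ← le_div_iff₀ hc₂] at d
      refine le_trans (le_of_eq ?_) (add_le_add u d)
      rw [← intervalIntegral.integral_add]
      · refine intervalIntegral.integral_congr fun s _ => ?_
        simp only [hG]
        rw [← Finset.sum_add_distrib]
        refine Finset.sum_congr rfl fun v _ => ?_
        rw [← mul_add, pow_one, ← neg_sub (T v 1 s) (r v)]
        congr 1
        rcases le_total (T v 1 s - r v) 0 with h | h
        · rw [abs_of_nonpos h, max_eq_right h, max_eq_left (by linarith), zero_add]
        · rw [abs_of_nonneg h, max_eq_left h, max_eq_right (by linarith), add_zero]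
      · exact Continuous.intervalIntegrable (by fun_prop) _ _
      · exact Continuous.intervalIntegrable (by fun_prop) _ _
    have hFd : ∀ t, 0 < t → HasDerivAt F (G t + (fun _ => (0:ℝ)) t) t := by
      intro t ht
      simp only [add_zero]
      refine ((hGc.integral_hasStrictDerivAt 0 t).hasDerivAt).congr_of_eventuallyEq ?_
      filter_upwards [lt_mem_nhds ht] with s hs
      simp only [hF, max_eq_left hs.le]
    have := barbalat (M := ∑ v, β v * p v * (lam v + p v)) (e := fun _ => 0) (c := 0)
      (Finset.sum_pos (fun v _ => mul_pos (hbp v) (add_pos (hlam v) (hp v))) Finset.univ_nonempty)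
      hFd (fun s t hs hst => ?_) tendsto_const_nhds (tendsto_atTop_ciSup hmono hbdd)
    · simpa using this
    · simp only [hG]
      rw [← Finset.sum_sub_distrib, Finset.sum_mul]
      refine (Finset.abs_sum_le_sum_abs _ _).trans (Finset.sum_le_sum fun v _ => ?_)
      rw [← mul_sub, abs_mul, abs_of_pos (hbp v), mul_assoc (β v * p v)]
      refine mul_le_mul_of_nonneg_left ?_ (hbp v).le
      refine (abs_abs_sub_abs_le _ _).trans (le_trans (le_of_eq ?_) (hlip v 0 s t hs hst))
      rw [hTq, hTq, ← abs_neg]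
      congr 1; ring
  have hq0lim : ∀ v, Tendsto (q v 0) atTop (nhds (1 - r v)) := by
    intro v
    rw [tendsto_iff_dist_tendsto_zero]
    have hz : Tendsto (fun t => G t / (β v * p v)) atTop (nhds 0) := by
      simpa using hGlim.div_const (β v * p v)
    refine squeeze_zero (fun t => dist_nonneg) (fun t => ?_) hz
    rw [le_div_iff₀ (hbp v), mul_comm, Real.dist_eq]
    have : |q v 0 t - (1 - r v)| = |T v 1 t - r v| := by
      rw [hTq, ← abs_neg]; congr 1; ring
    rw [this]
    exact Finset.single_le_sum (f := fun v => β v * p v * |T v 1 t - r v|)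
      (fun w _ => mul_nonneg (hbp w).le (abs_nonneg _)) (Finset.mem_univ v)
  have hγlim : Tendsto (gammaFn β p q) atTop (nhds γlo) := by
    have : Tendsto (gammaFn β p q) atTop (nhds (∑ v, β v * p v * (1 - (1 - r v)))) :=
      tendsto_finsetSum _ fun v _ => ((hq0lim v).const_sub 1).const_mul _
    simpa [hrlo] using this
  refine ⟨fun v => ?_, hγlim⟩
  have hmlim : Tendsto m atTop (nhds (exp (-γlo))) :=
    (Real.continuous_exp.tendsto _).comp hγlim.neg
  have hpm : 0 < p v * exp (-γlo) := mul_pos (hp v) (exp_pos _)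
  -- The derivative of `q v k` is `p e^{-γlo} q v (k+1)` plus a convergent remainder.
  have step : ∀ k A, Tendsto (q v k) atTop (nhds ((1 - r v) * r v ^ k)) →
      Tendsto (fun t => if k = 0 then 0 else q v (k-1) t) atTop (nhds A) →
      lam v * A = (if k = 0 then 0 else p v * exp (-γlo) * ((1 - r v) * r v ^ k)) →
      Tendsto (q v (k+1)) atTop (nhds ((1 - r v) * r v ^ (k+1))) := by
    intro k A hk hA hAeq
    have hz : Tendsto (fun t => (m t - exp (-γlo)) * q v (k+1) t) atTop (nhds 0) := by
      have h0 : Tendsto (fun t => |m t - exp (-γlo)|) atTop (nhds 0) := by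
        simpa using (hmlim.sub_const (exp (-γlo))).abs
      refine squeeze_zero_norm (fun t => ?_) h0
      rw [Real.norm_eq_abs, abs_mul, abs_of_nonneg (hq0 v (k+1) t)]
      exact mul_le_of_le_one_right (abs_nonneg _) (hq1 v (k+1) t)
    have hB : Tendsto (fun t => if k = 0 then 0 else q v k t) atTop
        (nhds (if k = 0 then 0 else (1 - r v) * r v ^ k)) := by
      split_ifs
      · exact tendsto_const_nhds
      · exact hk
    have he := (((hA.sub hk).const_mul (lam v)).add (hz.const_mul (p v))).sub
      ((hmlim.const_mul (p v)).mul hB)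
    have hu : Tendsto (fun t => p v * exp (-γlo) * q v (k+1) t) atTop _ :=
      barbalat (f := q v k) (M := p v * exp (-γlo) * (lam v + p v))
        (mul_pos hpm (add_pos (hlam v) (hp v)))
        (fun t ht => (hqd v k t ht).congr_deriv (by simp only [hm]; ring))
        (fun s t hs hst => by
          rw [← mul_sub, abs_mul, abs_of_pos hpm, mul_assoc (p v * exp (-γlo)) (lam v + p v)]
          exact mul_le_mul_of_nonneg_left (hlip v (k+1) s t hs hst) hpm.le) he hk
    have hu' := hu.const_mul (p v * exp (-γlo))⁻¹
    refine (hu'.congr fun t => ?_).trans (le_of_eq ?_)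
    · exact inv_mul_cancel_left₀ hpm.ne' _
    · congr 1
      rw [inv_mul_eq_iff_eq_mul₀ hpm.ne', mul_sub (lam v), hAeq, hlamr v]
      split_ifs <;> ring
  have hall : ∀ k, Tendsto (q v k) atTop (nhds ((1 - r v) * r v ^ k)) ∧
      Tendsto (q v (k+1)) atTop (nhds ((1 - r v) * r v ^ (k+1))) := by
    intro k
    induction k with
    | zero =>
      have h0 : Tendsto (q v 0) atTop (nhds ((1 - r v) * r v ^ 0)) := by simpa using hq0lim v
      exact ⟨h0, step 0 0 h0 (by simp) (by simp)⟩
    | succ k ih =>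
      refine ⟨ih.2, step (k+1) _ ih.2 (by simpa using ih.1) ?_⟩
      rw [hlamr v]; simp; ring
  exact fun k => (hall k).1

/-- Theorem 5(a): global stability of the mean-field slotted-Aloha system.
Under `0 < λ̄ < e⁻¹`, `ζ < γ̄(λ̄)` and `λ_v < p_v e^{−γ̲(λ̄)}` for all `v`,
every solution whose initial condition has a finite mean in every class
converges, in every class, to the geometric distribution with ratio
`r_v = λ_v e^{γ̲(λ̄)} / p_v`; in particular `γ(τ) → γ̲(λ̄)`. -/
theorem aloha_meanfield_global_stability
    {V : Type*} [Fintype V] [Nonempty V]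
    (β p lam : V → ℝ)
    (hβ : ∀ v, 0 < β v) (hp : ∀ v, 0 < p v) (hlam : ∀ v, 0 < lam v)
    (hβsum : ∑ v, β v = 1)
    (lamBar ζ : ℝ)
    (hlamBar : lamBar = ∑ v, β v * lam v)
    (hζdef : ζ = ∑ v, β v * p v)
    (hpos : 0 < lamBar) (hsub : lamBar < Real.exp (-1))
    (γlo γhi : ℝ)
    (hγlo_mem : γlo ∈ Set.Ioo (0:ℝ) 1) (hγlo_root : γlo * Real.exp (-γlo) = lamBar)
    (hγhi_mem : γhi ∈ Set.Ioi (1:ℝ)) (hγhi_root : γhi * Real.exp (-γhi) = lamBar)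
    (hζ : ζ < γhi)
    (hstab : ∀ v, lam v < p v * Real.exp (-γlo))
    (Q : V → ℕ → ℝ → ℝ) (hQ : IsMFSolution β p lam Q)
    (hfin : ∀ v, Summable (fun k : ℕ => (k : ℝ) * Q v k 0)) :
    (∀ v k, Tendsto (fun τ => Q v k τ) atTop
        (nhds ((1 - lam v * Real.exp γlo / p v) * (lam v * Real.exp γlo / p v) ^ k))) ∧
    Tendsto (gammaFn β p Q) atTop (nhds γlo) := by
  have hγroot : ∑ v, β v * p v * (lam v * exp γlo / p v) = γlo := by
    have h1 : ∀ v, β v * p v * (lam v * exp γlo / p v) = exp γlo * (β v * lam v) := fun v => by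
      have := (hp v).ne'
      field_simp
    simp_rw [h1]
    rw [← Finset.mul_sum, ← hlamBar, ← hγlo_root, mul_left_comm, ← exp_add]
    simp
  have hQ0 : ∀ t, 0 ≤ t → gammaFn β p (fun v k t => Q v k (max t 0)) t = gammaFn β p Q t := by
    intro t ht
    simp only [gammaFn, max_eq_left ht]
  obtain ⟨hmem, hsum, hder⟩ := hQ
  -- Extending the solution to negative times by its value at `0` makes it continuous on `ℝ`.
  have key := stability_aux hβ hp hlam hγlo_mem.1 hγlo_mem.2 hγhi_mem
    (hγlo_root.trans hγhi_root.symm) (hζdef ▸ hζ) (r := fun v => lam v * exp γlo / p v)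
    (fun v => div_pos (mul_pos (hlam v) (exp_pos _)) (hp v))
    (fun v => by
      rw [div_lt_one (hp v)]
      calc lam v * exp γlo < p v * exp (-γlo) * exp γlo :=
            mul_lt_mul_of_pos_right (hstab v) (exp_pos _)
        _ = p v := by rw [mul_assoc, ← exp_add]; simp)
    (fun v => by
      have := (hp v).ne'
      rw [exp_neg]
      field_simp)
    hγroot (q := fun v k t => Q v k (max t 0))
    (fun v k => by
      have hc : ContinuousOn (Q v k) (Ici 0) := fun t ht =>
        (hder v k t ht).continuousWithinAt
      exact hc.comp_continuous (by fun_prop) (fun t => le_max_right t 0))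
    (fun v k t => (hmem v k _ (le_max_right t 0)).1)
    (fun v k t => (hmem v k _ (le_max_right t 0)).2)
    (fun v t => hsum v _ (le_max_right t 0))
    (fun v k t ht => by
      rw [hQ0 t ht.le]
      simp only [max_eq_left ht.le]
      refine ((hder v k t ht.le).hasDerivAt (Ici_mem_nhds ht)).congr_of_eventuallyEq ?_
      filter_upwards [lt_mem_nhds ht] with s hs
      rw [max_eq_left hs.le])
    (fun v => by simpa using hfin v)
  refine ⟨fun v k => (key.1 v k).congr' ?_, key.2.congr' ?_⟩
  · filter_upwards [eventually_ge_atTop 0] with t ht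
    rw [max_eq_left ht]
  · filter_upwards [eventually_ge_atTop 0] with t ht using hQ0 t ht
end

section
/- Let V be a finite index set, let β_v > 0, p_v > 0, λ_v > 0 for v ∈ V with Σ_{v∈V} β_v = 1, and set λ̄ = Σ_v β_v λ_v and ζ = Σ_v β_v p_v. Assume 0 < λ̄ < e^{−1} and that either λ_v > p_v e^{−γ̲(λ̄)} for some v ∈ V, or ζ < γ̲(λ̄). Then the mean-field slotted-Aloha dynamical system is unstable: for every solution (Q_{(v,k)}) started from the empty state (Q_{(v,k)}(0) = 1_{k=0} for all v), the total workload W(τ) = Σ_{v∈V} β_v Σ_{k∈ℕ} k·Q_{(v,k)}(τ) (a value in [0,∞]) tends to +∞ as τ → ∞. -/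
/-!
The empty state is the least one and the dynamics are cooperative (longer queues raise `γ`, which
slows every service), so the solution is stochastically increasing in time: every tail mass
`Σ_{j ≥ k} Q_{(v,j)}`, hence also `γ`, is nondecreasing (`tailMass_mono`, via `shift_bound`).

If the workload did not tend to infinity it would be bounded by some `C` at arbitrarily late times,
and monotonicity turns this into a bound, uniform in time, on all the truncated means
`Σ_j min(j, N) Q_{(v,j)}` (`truncMean_le`). The tail masses then tend to `0` as `k → ∞` uniformly in
time, so that the truncated mean of class `v` has drift close to
`λ_v - p_v e^{-γ} (1 - Q_{(v,0)})` (`truncMean_hasDeriv`), and the total truncated workload has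
drift close to `λ̄ - γ e^{-γ}`. If `γ` stayed below some `g < γ̲`, the latter would be bounded below
by a positive constant, because `x e^{-x}` increases on `[0, 1]`; a bounded function has no such
drift (`false_of_drift`). Hence `γ` exceeds every `g < γ̲` at some time. This is impossible if
`ζ < γ̲`, since `γ ≤ ζ`. If instead `λ_v > p_v e^{-γ̲}`, then `γ` remains above some `g < γ̲` with
`λ_v > p_v e^{-g}` from some time on, and the truncated mean of class `v` has positive drift forever,
again a contradiction.
-/

open Filter Set Real

open scoped ENNReal

/-! ### Tail masses -/

/-- The tail mass `Σ_{j ≥ k} Q_{(v,j)}(τ)`, encoded as the finite expression `1 - Σ_{j < k}` so that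
it can be differentiated term by term. -/
noncomputable def tailMass {V : Type*} (Q : V → ℕ → ℝ → ℝ) (v : V) (k : ℕ) (τ : ℝ) : ℝ :=
  1 - ∑ j ∈ Finset.range k, Q v j τ

section Tail

variable {V : Type*} {Q : V → ℕ → ℝ → ℝ}

lemma tailMass_zero (v : V) (τ : ℝ) : tailMass Q v 0 τ = 1 := by simp [tailMass]

lemma tailMass_succ (v : V) (k : ℕ) (τ : ℝ) :
    tailMass Q v (k + 1) τ = tailMass Q v k τ - Q v k τ := by
  simp only [tailMass, Finset.sum_range_succ]; ring

lemma gammaFn_eq [Fintype V] (β p : V → ℝ) (τ : ℝ) :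
    gammaFn β p Q τ = ∑ v, β v * p v * tailMass Q v 1 τ := by
  simp [gammaFn, tailMass]

variable [Fintype V] {β p lam : V → ℝ}

lemma tailMass_antitone (hQ : IsMFSolution β p lam Q) (v : V) {τ : ℝ} (hτ : 0 ≤ τ) :
    Antitone (fun k => tailMass Q v k τ) := by
  refine antitone_nat_of_succ_le fun k => ?_
  have := (hQ.1 v k τ hτ).1
  simp only [tailMass_succ]; linarith

lemma tailMass_le_one (hQ : IsMFSolution β p lam Q) (v : V) (k : ℕ) {τ : ℝ} (hτ : 0 ≤ τ) :
    tailMass Q v k τ ≤ 1 := by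
  simpa [tailMass_zero] using tailMass_antitone hQ v hτ (Nat.zero_le k)

lemma tailMass_nonneg (hQ : IsMFSolution β p lam Q) (v : V) (k : ℕ) {τ : ℝ} (hτ : 0 ≤ τ) :
    0 ≤ tailMass Q v k τ := by
  have := sum_le_hasSum (Finset.range k) (fun i _ => (hQ.1 v i τ hτ).1) (hQ.2.1 v τ hτ)
  simp only [tailMass]; linarith

lemma tailMass_tendsto (hQ : IsMFSolution β p lam Q) (v : V) {τ : ℝ} (hτ : 0 ≤ τ) :
    Tendsto (fun k => tailMass Q v k τ) atTop (nhds 0) := by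
  have := (hQ.2.1 v τ hτ).tendsto_sum_nat
  simpa [tailMass] using this.const_sub 1

/-- The flux through the cut between `k` and `k + 1`: summing the Kolmogorov equations over
`j ≤ k` telescopes. -/
lemma tailMass_hasDeriv (hQ : IsMFSolution β p lam Q) (v : V) (k : ℕ) {τ : ℝ} (hτ : 0 ≤ τ) :
    HasDerivWithinAt (tailMass Q v (k + 1))
      (lam v * Q v k τ - p v * Real.exp (-(gammaFn β p Q τ)) * Q v (k + 1) τ) (Set.Ici 0) τ := by
  induction k with
  | zero =>
    have h := (hQ.2.2 v 0 τ hτ).const_sub 1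
    refine (h.congr_deriv ?_).congr_of_mem (fun x _ => ?_) hτ
    · simp; ring
    · simp [tailMass]
  | succ k ih =>
    have h := ih.sub (hQ.2.2 v (k + 1) τ hτ)
    refine (h.congr_deriv ?_).congr_of_mem (fun x _ => ?_) hτ
    · simp; ring
    · rw [tailMass_succ]; rfl

lemma gammaFn_nonneg (hβ : ∀ v, 0 < β v) (hp : ∀ v, 0 < p v) (hQ : IsMFSolution β p lam Q)
    {τ : ℝ} (hτ : 0 ≤ τ) : 0 ≤ gammaFn β p Q τ := by
  rw [gammaFn_eq]
  exact Finset.sum_nonneg fun v _ =>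
    mul_nonneg (mul_pos (hβ v) (hp v)).le (tailMass_nonneg hQ v 1 hτ)

/-! ### Monotonicity in time -/

/-- Comparison of the solution with its time shift by `h`. The bound `2⁻ⁿ e^{Lt}` is propagated by
induction on `n`: cooperativity makes the derivative of the negative part of the `k`-th difference
controlled by that of the neighbouring differences, so with `L` large a bound `2b` on all
differences forbids crossing the barrier `b` at each `k` separately. -/
lemma shift_bound (hβ : ∀ v, 0 < β v) (hp : ∀ v, 0 < p v) (hlam : ∀ v, 0 < lam v)
    (hQ : IsMFSolution β p lam Q) (hempty : ∀ v k, Q v k 0 = if k = 0 then 1 else 0)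
    {h : ℝ} (hh : 0 ≤ h) (n : ℕ) : ∀ v k t, 0 ≤ t →
      tailMass Q v k t - tailMass Q v k (t + h) ≤ (1 / 2) ^ n *
        Real.exp ((∑ v, (lam v + p v + 2 * p v * ∑ w, β w * p w) + 1) * t) := by
  have hζ : 0 ≤ ∑ w, β w * p w := Finset.sum_nonneg fun w _ => (mul_pos (hβ w) (hp w)).le
  have hterm : ∀ v, 0 ≤ lam v + p v + 2 * p v * ∑ w, β w * p w := fun v => by
    have := hlam v; have := hp v; positivity
  set L := ∑ v, (lam v + p v + 2 * p v * ∑ w, β w * p w) + 1 with hL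
  have hL0 : 0 < L := by
    have := Finset.sum_nonneg (s := Finset.univ) fun v _ => hterm v
    linarith
  induction n with
  | zero =>
    intro v k t ht
    have h1 := tailMass_le_one hQ v k ht
    have h2 := tailMass_nonneg hQ v k (add_nonneg ht hh)
    have h3 : 1 ≤ Real.exp (L * t) := Real.one_le_exp (by positivity)
    simp; linarith
  | succ n ih =>
    intro v k t ht
    rcases k with _ | k
    · simp only [tailMass_zero, sub_self]; positivity
    have hd : ∀ x, 0 ≤ x → HasDerivWithinAt
        (fun x => tailMass Q v (k + 1) x - tailMass Q v (k + 1) (x + h))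
        ((lam v * Q v k x - p v * Real.exp (-(gammaFn β p Q x)) * Q v (k + 1) x) -
         (lam v * Q v k (x + h) - p v * Real.exp (-(gammaFn β p Q (x + h))) * Q v (k + 1) (x + h)))
        (Set.Ici 0) x := by
      intro x hx
      refine (tailMass_hasDeriv hQ v k hx).sub ?_
      have h1 := (tailMass_hasDeriv hQ v k (add_nonneg hx hh)).comp x
        ((hasDerivWithinAt_id x (Set.Ici 0)).add_const h)
        (fun y hy => add_nonneg (Set.mem_Ici.1 hy) hh)
      exact h1.congr_deriv (by simp)
    have hB : ∀ x, HasDerivAt (fun x => (1 / 2 : ℝ) ^ (n + 1) * Real.exp (L * x))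
        (L * ((1 / 2) ^ (n + 1) * Real.exp (L * x))) x := by
      intro x
      have h1 := (((hasDerivAt_id x).const_mul L).exp).const_mul ((1 / 2 : ℝ) ^ (n + 1))
      exact h1.congr_deriv (by simp; ring)
    refine image_le_of_deriv_right_lt_deriv_boundary' (a := 0) (b := t)
      (fun x hx => ((hd x hx.1).continuousWithinAt.mono Set.Icc_subset_Ici_self))
      (fun x hx => (hd x hx.1).mono (Set.Ici_subset_Ici.2 hx.1)) ?_
      (fun x _ => (hB x).continuousAt.continuousWithinAt)
      (fun x _ => (hB x).hasDerivWithinAt) ?_ (Set.right_mem_Icc.2 ht)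
    · have h1 : tailMass Q v (k + 1) 0 = 0 := by simp [tailMass, hempty]
      have h2 := tailMass_nonneg hQ v (k + 1) (add_nonneg le_rfl hh : (0:ℝ) ≤ 0 + h)
      rw [h1]
      have : (0:ℝ) ≤ (1 / 2) ^ (n + 1) * Real.exp (L * 0) := by positivity
      linarith
    · intro x hx heq
      have hx0 := hx.1
      have hxh : 0 ≤ x + h := add_nonneg hx0 hh
      set b := (1 / 2 : ℝ) ^ (n + 1) * Real.exp (L * x) with hb
      have hb0 : 0 < b := by positivity
      have h2b : ∀ w j, tailMass Q w j x - tailMass Q w j (x + h) ≤ 2 * b := by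
        intro w j
        refine (ih w j x hx0).trans (le_of_eq ?_)
        rw [hb, pow_succ]; ring
      have hγ : gammaFn β p Q x - gammaFn β p Q (x + h) ≤ 2 * b * ∑ w, β w * p w := by
        rw [gammaFn_eq, gammaFn_eq, ← Finset.sum_sub_distrib, Finset.mul_sum]
        refine Finset.sum_le_sum fun w _ => ?_
        have := mul_le_mul_of_nonneg_left (h2b w 1) (mul_pos (hβ w) (hp w)).le
        linarith
      have hk := h2b v k
      have hk2 := h2b v (k + 1 + 1)
      have e1 := tailMass_succ (Q := Q) v k x
      have e2 := tailMass_succ (Q := Q) v k (x + h)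
      have e3 := tailMass_succ (Q := Q) v (k + 1) x
      have e4 := tailMass_succ (Q := Q) v (k + 1) (x + h)
      have hγ0 := gammaFn_nonneg hβ hp hQ hx0
      have hγ1 := gammaFn_nonneg hβ hp hQ hxh
      have hq := hQ.1 v (k + 1) x hx0
      set g0 := gammaFn β p Q x
      set g1 := gammaFn β p Q (x + h)
      set Z := ∑ w, β w * p w
      have hE1 : Real.exp (-g1) ≤ 1 := Real.exp_le_one_iff.2 (by linarith)
      have hE1' := Real.exp_pos (-g1)
      have hE : Real.exp (-g1) - Real.exp (-g0) ≤ 2 * b * Z := by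
        have h3 := Real.add_one_le_exp (g1 - g0)
        have h4 : Real.exp (-g0) = Real.exp (-g1) * Real.exp (g1 - g0) := by
          rw [← Real.exp_add]; congr 1; ring
        have hbZ : 0 ≤ 2 * b * Z := by positivity
        rw [h4]
        nlinarith [mul_le_mul_of_nonneg_left h3 hE1'.le]
      have hLv : lam v + p v + 2 * p v * Z + 1 ≤ L := by
        have := Finset.single_le_sum (f := fun v => lam v + p v + 2 * p v * Z)
          (fun w _ => hterm w) (Finset.mem_univ v)
        linarith
      have hQk : Q v k x - Q v k (x + h) ≤ b := by linarith
      have hQk1 : Q v (k + 1) (x + h) - Q v (k + 1) x ≤ b := by linarith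
      have hbZ : 0 ≤ 2 * b * Z := by positivity
      have A1 : lam v * (Q v k x - Q v k (x + h)) ≤ lam v * b :=
        mul_le_mul_of_nonneg_left hQk (hlam v).le
      have A2 : Real.exp (-g1) * (Q v (k + 1) (x + h) - Q v (k + 1) x) ≤ b :=
        (mul_le_mul_of_nonneg_left hQk1 hE1'.le).trans (by nlinarith)
      have A3 : (Real.exp (-g1) - Real.exp (-g0)) * Q v (k + 1) x ≤ 2 * b * Z :=
        (mul_le_mul_of_nonneg_right hE hq.1).trans (by nlinarith [hq.2])
      have A4 := mul_le_mul_of_nonneg_left (add_le_add A2 A3) (hp v).le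
      have A5 := mul_le_mul_of_nonneg_right hLv hb0.le
      nlinarith

/-- From the empty state the solution is stochastically increasing in time. -/
lemma tailMass_mono (hβ : ∀ v, 0 < β v) (hp : ∀ v, 0 < p v) (hlam : ∀ v, 0 < lam v)
    (hQ : IsMFSolution β p lam Q) (hempty : ∀ v k, Q v k 0 = if k = 0 then 1 else 0)
    (v : V) (k : ℕ) {s t : ℝ} (hs : 0 ≤ s) (hst : s ≤ t) :
    tailMass Q v k s ≤ tailMass Q v k t := by
  have h0 := fun n => shift_bound hβ hp hlam hQ hempty (sub_nonneg.2 hst) n v k s hs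
  have hlim : Tendsto (fun n : ℕ => (1 / 2 : ℝ) ^ n *
      Real.exp ((∑ v, (lam v + p v + 2 * p v * ∑ w, β w * p w) + 1) * s)) atTop (nhds 0) := by
    simpa using (tendsto_pow_atTop_nhds_zero_of_lt_one (by norm_num : (0:ℝ) ≤ 1 / 2)
      (by norm_num)).mul_const
        (Real.exp ((∑ v, (lam v + p v + 2 * p v * ∑ w, β w * p w) + 1) * s))
  have := ge_of_tendsto' hlim h0
  rw [add_sub_cancel] at this
  linarith

/-! ### Truncated workload -/

/-- The mean of the truncated queue, `Σ_j min(j, N) Q_{(v,j)} = Σ_{1 ≤ k ≤ N} Σ_{j ≥ k} Q_{(v,j)}`. -/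
noncomputable def truncMean {V : Type*} (Q : V → ℕ → ℝ → ℝ) (v : V) (N : ℕ) (τ : ℝ) : ℝ :=
  ∑ k ∈ Finset.range N, tailMass Q v (k + 1) τ

lemma truncMean_hasDeriv (hQ : IsMFSolution β p lam Q) (v : V) (N : ℕ) {τ : ℝ} (hτ : 0 ≤ τ) :
    HasDerivWithinAt (truncMean Q v N)
      (lam v * (1 - tailMass Q v N τ) - p v * Real.exp (-(gammaFn β p Q τ)) *
        (tailMass Q v 1 τ - tailMass Q v (N + 1) τ)) (Set.Ici 0) τ := by
  have h := HasDerivWithinAt.fun_sum (u := Finset.range N)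
    (fun k _ => tailMass_hasDeriv hQ v k hτ)
  refine h.congr_deriv ?_
  clear h
  induction N with
  | zero => simp [tailMass_zero]
  | succ N ih =>
    rw [Finset.sum_range_succ, ih, tailMass_succ v (N + 1), tailMass_succ v N]; ring

/-- The truncated mean is dominated by the full mean. Abel summation over `j < M` gives the bound
up to `N` times the tail at `M`, which vanishes as `M → ∞`. -/
lemma truncMean_le (hQ : IsMFSolution β p lam Q) (v : V) (N : ℕ) {τ : ℝ} (hτ : 0 ≤ τ)
    {C : ℝ} (hC : 0 ≤ C)
    (h : ∑' k : ℕ, (k : ℝ≥0∞) * ENNReal.ofReal (Q v k τ) ≤ ENNReal.ofReal C) :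
    truncMean Q v N τ ≤ C := by
  have habel : ∀ M : ℕ, ∑ j ∈ Finset.range M, (j : ℝ) * Q v j τ =
      truncMean Q v M τ - M * tailMass Q v M τ := by
    intro M
    induction M with
    | zero => simp [truncMean]
    | succ M ih =>
      rw [Finset.sum_range_succ, ih]
      simp only [truncMean, Finset.sum_range_succ, tailMass_succ v M]
      push_cast; ring
  have hpart : ∀ M : ℕ, ∑ j ∈ Finset.range M, (j : ℝ) * Q v j τ ≤ C := by
    intro M
    rw [← ENNReal.ofReal_le_ofReal_iff hC]
    refine le_trans ?_ h
    rw [ENNReal.ofReal_sum_of_nonneg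
      (fun j _ => mul_nonneg (Nat.cast_nonneg j) (hQ.1 v j τ hτ).1)]
    refine le_trans (le_of_eq ?_) (ENNReal.sum_le_tsum (Finset.range M))
    refine Finset.sum_congr rfl fun j _ => ?_
    rw [ENNReal.ofReal_mul (Nat.cast_nonneg j), ENNReal.ofReal_natCast]
  have hlim : Tendsto (fun M => C + N * tailMass Q v M τ) atTop (nhds C) := by
    simpa using ((tailMass_tendsto hQ v hτ).const_mul (N : ℝ)).const_add C
  refine ge_of_tendsto hlim ?_
  filter_upwards [eventually_ge_atTop N] with M hM
  have h1 : ∑ k ∈ Finset.range N, (tailMass Q v (k + 1) τ - tailMass Q v M τ) ≤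
      ∑ k ∈ Finset.range M, (tailMass Q v (k + 1) τ - tailMass Q v M τ) := by
    refine Finset.sum_le_sum_of_subset_of_nonneg (Finset.range_mono hM) fun k hk _ => ?_
    exact sub_nonneg.2 (tailMass_antitone hQ v hτ (Finset.mem_range.1 hk))
  simp only [Finset.sum_sub_distrib, Finset.sum_const, Finset.card_range, nsmul_eq_mul] at h1
  have h2 := hpart M
  rw [habel] at h2
  simp only [truncMean] at h2 ⊢
  linarith

end Tail

/-! ### Positive drift is incompatible with boundedness -/

lemma false_of_drift {f f' : ℝ → ℝ} {T c C : ℝ} (hT : 0 ≤ T) (hc : 0 < c)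
    (hf : ∀ t, 0 ≤ t → HasDerivWithinAt f (f' t) (Set.Ici 0) t)
    (hf' : ∀ t, T ≤ t → c ≤ f' t) (hC : ∀ t, T ≤ t → f t ≤ C) : False := by
  have hB : ∀ x, HasDerivAt (fun x => f T + c * (x - T)) c x := fun x => by
    have h1 := (((hasDerivAt_id x).sub_const T).const_mul c).const_add (f T)
    exact h1.congr_deriv (by simp)
  have key : ∀ t, T ≤ t → f T + c * (t - T) ≤ f t := fun t ht =>
    image_le_of_deriv_right_le_deriv_boundary (a := T) (b := t)
      (fun x _ => (hB x).continuousAt.continuousWithinAt)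
      (fun x _ => (hB x).hasDerivWithinAt) (by simp)
      (fun x hx => (hf x (hT.trans hx.1)).continuousWithinAt.mono
        (fun y hy => hT.trans hy.1))
      (fun x hx => (hf x (hT.trans hx.1)).mono (Set.Ici_subset_Ici.2 (hT.trans hx.1)))
      (fun x hx => hf' x hx.1) (Set.right_mem_Icc.2 ht)
  have hTC := hC T le_rfl
  have hx : T ≤ T + (C - f T + 1) / c := by
    have : 0 ≤ (C - f T + 1) / c := by apply div_nonneg <;> linarith
    linarith
  have h1 := key _ hx
  have h2 := hC _ hx
  have h3 : c * (T + (C - f T + 1) / c - T) = C - f T + 1 := by field_simp; ring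
  linarith

lemma mul_exp_neg_lt {x y : ℝ} (hx : 0 ≤ x) (hxy : x < y) (hy : y < 1) :
    x * Real.exp (-x) < y * Real.exp (-y) := by
  have h1 := Real.add_one_le_exp (x - y)
  have h2 : Real.exp (-y) = Real.exp (-x) * Real.exp (x - y) := by
    rw [← Real.exp_add]; congr 1; ring
  have h3 : x < y * Real.exp (x - y) := by nlinarith
  rw [h2]
  nlinarith [Real.exp_pos (-x)]

/-! ### Instability -/

theorem aloha_meanfield_instability
    {V : Type*} [Fintype V] [Nonempty V]
    (β p lam : V → ℝ)
    (hβ : ∀ v, 0 < β v) (hp : ∀ v, 0 < p v) (hlam : ∀ v, 0 < lam v)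
    (hβsum : ∑ v, β v = 1)
    (lamBar ζ : ℝ)
    (hlamBar : lamBar = ∑ v, β v * lam v)
    (hζdef : ζ = ∑ v, β v * p v)
    (hpos : 0 < lamBar) (hsub : lamBar < Real.exp (-1))
    (γlo : ℝ)
    (hγlo_mem : γlo ∈ Set.Ioo (0:ℝ) 1) (hγlo_root : γlo * Real.exp (-γlo) = lamBar)
    (hcond : (∃ v, p v * Real.exp (-γlo) < lam v) ∨ ζ < γlo)
    (Q : V → ℕ → ℝ → ℝ) (hQ : IsMFSolution β p lam Q)
    (hempty : ∀ v k, Q v k 0 = if k = 0 then 1 else 0) :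
    Tendsto (fun τ => ∑ v, ENNReal.ofReal (β v) *
        ∑' k : ℕ, (k : ℝ≥0∞) * ENNReal.ofReal (Q v k τ)) atTop (nhds ⊤) := by
  rw [ENNReal.tendsto_nhds_top_iff_nnreal]
  by_contra hcon
  push Not at hcon
  obtain ⟨C, hfreq⟩ := hcon
  have hmono := fun v k s t hs hst =>
    tailMass_mono hβ hp hlam hQ hempty v k (s := s) (t := t) hs hst
  -- Workload `≤ C` at arbitrarily late times bounds every truncated mean at all times.
  have hb : ∀ v N t, 0 ≤ t → truncMean Q v N t ≤ C / β v := by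
    intro v N t ht
    obtain ⟨a, hat, ha⟩ := (frequently_atTop.1 hfreq) t
    have ha0 := ht.trans hat
    refine (Finset.sum_le_sum fun k _ => hmono v (k + 1) t a ht hat).trans ?_
    refine truncMean_le hQ v N ha0 (div_nonneg C.2 (hβ v).le) ?_
    have h1 := (Finset.single_le_sum (f := fun v => ENNReal.ofReal (β v) *
        ∑' k : ℕ, (k : ℝ≥0∞) * ENNReal.ofReal (Q v k a))
        (fun _ _ => zero_le) (Finset.mem_univ v)).trans ha
    rw [ENNReal.ofReal_div_of_pos (hβ v), ENNReal.ofReal_coe_nnreal,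
      ENNReal.le_div_iff_mul_le (Or.inl (by simpa using hβ v)) (Or.inl ENNReal.ofReal_ne_top),
      mul_comm]
    exact h1
  have hsmall : ∀ ε, 0 < ε → ∃ N : ℕ, ∀ v t, 0 ≤ t → tailMass Q v N t ≤ ε := by
    intro ε hε
    have hnn : ∀ v, 0 ≤ (C : ℝ) / β v := fun v => div_nonneg C.2 (hβ v).le
    obtain ⟨N, hN⟩ := exists_nat_gt ((∑ v, (C : ℝ) / β v) / ε)
    refine ⟨N, fun v t ht => ?_⟩
    have hN0 : (0 : ℝ) < N :=
      lt_of_le_of_lt (div_nonneg (Finset.sum_nonneg fun v _ => hnn v) hε.le) hN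
    have h1 : (N : ℝ) * tailMass Q v N t ≤ truncMean Q v N t := by
      have := Finset.card_nsmul_le_sum (Finset.range N) (fun k => tailMass Q v (k + 1) t)
        (tailMass Q v N t)
        (fun k hk => tailMass_antitone hQ v ht (Finset.mem_range.1 hk))
      simpa [truncMean] using this
    have h2 := hb v N t ht
    have h3 := Finset.single_le_sum (f := fun v => (C : ℝ) / β v)
      (fun w _ => hnn w) (Finset.mem_univ v)
    rw [div_lt_iff₀ hε] at hN
    refine le_of_mul_le_mul_left ?_ hN0
    linarith
  -- If `γ` stayed below `g < γ̲`, the total throughput `γ e^{-γ}` would stay below `λ̄`.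
  have hγbig : ∀ g, 0 ≤ g → g < γlo → ∃ t, 0 ≤ t ∧ g < gammaFn β p Q t := by
    intro g hg0 hg
    by_contra! hall
    have hδ : g * Real.exp (-g) < lamBar := hγlo_root ▸ mul_exp_neg_lt hg0 hg hγlo_mem.2
    obtain ⟨N, hN⟩ := hsmall ((lamBar - g * Real.exp (-g)) / (2 * lamBar))
      (div_pos (by linarith) (by linarith))
    refine false_of_drift (f := fun t => ∑ v, β v * truncMean Q v N t) (T := 0)
      (c := (lamBar - g * Real.exp (-g)) / 2) (C := ∑ v, β v * (C / β v)) le_rfl (by linarith)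
      (fun t ht => HasDerivWithinAt.fun_sum fun v _ =>
        (truncMean_hasDeriv hQ v N ht).const_mul (β v)) ?_
      (fun t ht => Finset.sum_le_sum fun v _ => mul_le_mul_of_nonneg_left (hb v N t ht) (hβ v).le)
    intro t ht
    set ε := (lamBar - g * Real.exp (-g)) / (2 * lamBar) with hε
    have hγg : gammaFn β p Q t * Real.exp (-(gammaFn β p Q t)) ≤ g * Real.exp (-g) := by
      rcases (hall t ht).lt_or_eq with h | h
      · exact (mul_exp_neg_lt (gammaFn_nonneg hβ hp hQ ht) h (hg.trans hγlo_mem.2)).le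
      · rw [h]
    have hsum : ∑ v, β v * (lam v * (1 - ε) -
        p v * Real.exp (-(gammaFn β p Q t)) * tailMass Q v 1 t) =
        lamBar * (1 - ε) - gammaFn β p Q t * Real.exp (-(gammaFn β p Q t)) := by
      rw [hlamBar]
      nth_rewrite 2 [gammaFn_eq]
      rw [Finset.sum_mul, Finset.sum_mul, ← Finset.sum_sub_distrib]
      exact Finset.sum_congr rfl fun v _ => by ring
    have hεl : lamBar * ε = (lamBar - g * Real.exp (-g)) / 2 := by
      rw [hε]; field_simp
    have hlow : lamBar * (1 - ε) - gammaFn β p Q t * Real.exp (-(gammaFn β p Q t)) ≥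
        (lamBar - g * Real.exp (-g)) / 2 := by linarith
    refine hlow.le.trans (hsum.symm.le.trans (Finset.sum_le_sum fun v _ => ?_))
    refine mul_le_mul_of_nonneg_left ?_ (hβ v).le
    have h1 := mul_le_mul_of_nonneg_left (hN v t ht) (hlam v).le
    have h2 := mul_nonneg (mul_pos (hp v) (Real.exp_pos (-(gammaFn β p Q t)))).le
      (tailMass_nonneg hQ v (N + 1) ht)
    linarith
  rcases hcond with ⟨v, hv⟩ | hζ
  · -- By continuity class `v` is already overloaded at service rates given by some `g < γ̲`.
    obtain ⟨g, hg0, hg, hgv⟩ : ∃ g, 0 ≤ g ∧ g < γlo ∧ p v * Real.exp (-g) < lam v := by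
      have hc : ContinuousAt (fun g => p v * Real.exp (-g)) γlo := by fun_prop
      have h1 : ∀ᶠ g in nhdsWithin γlo (Set.Iio γlo), p v * Real.exp (-g) < lam v :=
        (hc.eventually_lt_const hv).filter_mono nhdsWithin_le_nhds
      have h2 : ∀ᶠ g in nhdsWithin γlo (Set.Iio γlo), 0 < g :=
        (lt_mem_nhds hγlo_mem.1).filter_mono nhdsWithin_le_nhds
      obtain ⟨g, ⟨ha, hb'⟩, hc'⟩ := ((h1.and h2).and self_mem_nhdsWithin).exists
      exact ⟨g, hb'.le, hc', ha⟩
    obtain ⟨T, hT, hγT⟩ := hγbig g hg0 hg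
    obtain ⟨N, hN⟩ := hsmall ((lam v - p v * Real.exp (-g)) / (2 * lam v))
      (div_pos (by linarith) (by linarith [hlam v]))
    refine false_of_drift (f := truncMean Q v N) (T := T)
      (c := (lam v - p v * Real.exp (-g)) / 2) (C := C / β v) hT (by linarith)
      (fun t ht => truncMean_hasDeriv hQ v N ht) ?_ (fun t ht => hb v N t (hT.trans ht))
    intro t ht
    have ht0 := hT.trans ht
    have hγt : g ≤ gammaFn β p Q t := by
      refine hγT.le.trans ?_
      rw [gammaFn_eq, gammaFn_eq]
      exact Finset.sum_le_sum fun w _ =>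
        mul_le_mul_of_nonneg_left (hmono w 1 T t hT ht) (mul_pos (hβ w) (hp w)).le
    have h1 := mul_le_mul_of_nonneg_left (hN v t ht0) (hlam v).le
    have h1' : lam v * ((lam v - p v * Real.exp (-g)) / (2 * lam v)) =
        (lam v - p v * Real.exp (-g)) / 2 := by
      have := (hlam v).ne'
      field_simp
    have h2 : Real.exp (-(gammaFn β p Q t)) *
        (tailMass Q v 1 t - tailMass Q v (N + 1) t) ≤ Real.exp (-g) * 1 := by
      have h3 := tailMass_le_one hQ v 1 ht0
      have h4 := tailMass_nonneg hQ v (N + 1) ht0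
      have h5 := tailMass_antitone hQ v ht0 (Nat.succ_le_succ (Nat.zero_le N))
      exact mul_le_mul (Real.exp_le_exp.2 (by linarith)) (by linarith) (sub_nonneg.2 h5)
        (Real.exp_pos _).le
    have h6 := mul_le_mul_of_nonneg_left h2 (hp v).le
    linarith
  · have hζ0 : 0 ≤ ζ := hζdef ▸ Finset.sum_nonneg fun v _ => (mul_pos (hβ v) (hp v)).le
    obtain ⟨t, ht, hlt⟩ := hγbig ζ hζ0 hζ
    refine absurd hlt (not_lt.2 ?_)
    rw [gammaFn_eq, hζdef]
    refine Finset.sum_le_sum fun w _ => ?_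
    exact mul_le_of_le_one_right (mul_pos (hβ w) (hp w)).le (tailMass_le_one hQ w 1 ht)
end

section
/- Let V be a finite index set, let β_v > 0, p_v > 0, λ_v > 0 for v ∈ V with Σ_{v∈V} β_v = 1. Let γ > 0 satisfy γ e^{−γ} = Σ_v β_v λ_v, and assume λ_v < p_v e^{−γ} for every v ∈ V. Define r_v = λ_v e^{γ} / p_v ∈ (0,1) and Q_{(v,k)} = (1 − r_v) r_v^k for k ∈ ℕ. Then: (i) Σ_{v∈V} β_v p_v (1 − Q_{(v,0)}) = γ; and (ii) for every v ∈ V and k ∈ ℕ, λ_v(1_{k>0} Q_{(v,k−1)} − Q_{(v,k)}) + p_v e^{−γ}(Q_{(v,k+1)} − 1_{k>0} Q_{(v,k)}) = 0. In particular the constant-in-time family (Q_{(v,k)}) is an equilibrium (fixed point) of the mean-field slotted-Aloha dynamical system. -/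
/-! With `m = p v * exp (-γ)`, the ratio satisfies `m * r v = lam v` (detailed balance for the
M/M/1 queue with arrival rate `lam v` and service rate `m`). Since `Q v (k+1) = r v * Q v k`, the
flux `lam v * Q v k` across each edge `k → k+1` equals the return flux `m * Q v (k+1)`, so every
right-hand side vanishes. As `1 - Q v 0 = r v` and `p v * r v = exp γ * lam v`, the sum over classes
is `exp γ * ∑ v, β v * lam v`, which the equation `γ * exp (-γ) = ∑ v, β v * lam v` turns into `γ`. -/

open Filter Set Real

/-- The geometric family `Q_{(v,k)} = (1 − r_v) r_v^k` with
`r_v = λ_v e^{γ} / p_v`, where `γ e^{−γ} = Σ_v β_v λ_v` and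
`λ_v < p_v e^{−γ}`, is an equilibrium of the mean-field slotted-Aloha
dynamical system: (i) `Σ_v β_v p_v (1 − Q_{(v,0)}) = γ`, and (ii) every
right-hand side of the Kolmogorov ODEs vanishes. -/
theorem aloha_meanfield_equilibrium
    {V : Type*} [Fintype V]
    (β p lam : V → ℝ)
    (hβ : ∀ v, 0 < β v) (hp : ∀ v, 0 < p v) (hlam : ∀ v, 0 < lam v)
    (hβsum : ∑ v, β v = 1)
    (γ : ℝ) (hγ : 0 < γ) (hroot : γ * Real.exp (-γ) = ∑ v, β v * lam v)
    (hstab : ∀ v, lam v < p v * Real.exp (-γ))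
    (r : V → ℝ) (hr : ∀ v, r v = lam v * Real.exp γ / p v)
    (Q : V → ℕ → ℝ) (hQdef : ∀ v k, Q v k = (1 - r v) * r v ^ k) :
    (∀ v, r v ∈ Set.Ioo (0:ℝ) 1) ∧
    (∑ v, β v * p v * (1 - Q v 0)) = γ ∧
    (∀ v, ∀ k : ℕ,
      lam v * ((if k = 0 then 0 else Q v (k-1)) - Q v k)
        + p v * Real.exp (-γ) * (Q v (k+1) - (if k = 0 then 0 else Q v k)) = 0) := by
  have hexp : Real.exp γ * Real.exp (-γ) = 1 := by rw [← Real.exp_add]; simp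
  have hpr : ∀ v, p v * r v = Real.exp γ * lam v := fun v => by
    rw [hr v]; field_simp [(hp v).ne']
  have hbal : ∀ v, p v * Real.exp (-γ) * r v = lam v := fun v => by
    linear_combination Real.exp (-γ) * hpr v + lam v * hexp
  refine ⟨fun v => ⟨?_, ?_⟩, ?_, fun v k => ?_⟩
  · have := hp v
    have := hlam v
    rw [hr v]; positivity
  · have hm : 0 < p v * Real.exp (-γ) := mul_pos (hp v) (Real.exp_pos _)
    have hs := hstab v
    nlinarith [hbal v]
  · calc ∑ v, β v * p v * (1 - Q v 0) = ∑ v, Real.exp γ * (β v * lam v) :=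
          Finset.sum_congr rfl fun v _ => by
            rw [hQdef, pow_zero]; linear_combination β v * hpr v
      _ = γ := by
          rw [← Finset.mul_sum, ← hroot]; linear_combination γ * hexp
  · cases k with
    | zero =>
      simp only [hQdef, if_true, zero_add, pow_zero, pow_one]
      linear_combination (1 - r v) * hbal v
    | succ n =>
      simp only [hQdef, Nat.succ_ne_zero, if_false, Nat.add_sub_cancel]
      linear_combination ((1 - r v) * r v ^ (n + 1) - (1 - r v) * r v ^ n) * hbal v
end

section
/- Let V be a finite index set, let β_v > 0, p_v > 0, λ_v > 0 for v ∈ V with Σ_{v∈V} β_v = 1, and set λ̄ = Σ_v β_v λ_v. Assume 0 < λ̄ < e^{−1} and λ_v < p_v e^{−γ̄(λ̄)} for every v ∈ V. Then the mean-field slotted-Aloha dynamical system admits at least two distinct equilibria: for each γ ∈ {γ̲(λ̄), γ̄(λ̄)}, the family Q^γ_{(v,k)} = (1 − r_v(γ)) r_v(γ)^k with r_v(γ) = λ_v e^{γ}/p_v ∈ (0,1) satisfies Σ_v β_v p_v(1 − Q^γ_{(v,0)}) = γ and makes all right-hand sides of the ODEs vanish, and the two families (for γ = γ̲(λ̄)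 and γ = γ̄(λ̄)) are distinct. -/
/-!
Write `r_v = λ_v e^γ / p_v`. The geometric law of ratio `r_v` satisfies detailed balance for the
birth-death chain with birth rate `λ_v` and death rate `p_v e^{-γ}`, since
`p_v e^{-γ} r_v = λ_v`; hence the right-hand sides vanish. Its intensity
`Σ β_v p_v (1 - Q_{(v,0)}) = Σ β_v p_v r_v` is `λ̄ e^γ`, which equals `γ` exactly because
`γ e^{-γ} = λ̄`. Stability at the larger root gives `r_v < 1` at both roots by monotonicity of
`exp`. Finally a family determines its intensity, so the two families differ since
`γlo < 1 < γhi`.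
-/

open Filter Set Real

/-- The candidate equilibrium of the mean-field slotted-Aloha system associated
with a root `γ` of `γ e^{−γ} = λ̄`: class `v` is geometric with ratio
`r_v(γ) = λ_v e^{γ} / p_v`. -/
noncomputable def QeqAloha {V : Type*} (p lam : V → ℝ) (γ : ℝ) (v : V) (k : ℕ) : ℝ :=
  (1 - lam v * Real.exp γ / p v) * (lam v * Real.exp γ / p v) ^ k

/-- Theorem 5(c): if `0 < λ̄ < e⁻¹` and `λ_v < p_v e^{−γ̄(λ̄)}` for every `v`,
then the mean-field slotted-Aloha dynamical system admits at least two distinct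
equilibria: one for each root `γ ∈ {γ̲(λ̄), γ̄(λ̄)}` of `γ e^{−γ} = λ̄`, given by
the geometric families with ratios `r_v(γ) = λ_v e^{γ}/p_v ∈ (0,1)`. -/
theorem aloha_meanfield_two_equilibria
    {V : Type*} [Fintype V] [Nonempty V]
    (β p lam : V → ℝ)
    (hβ : ∀ v, 0 < β v) (hp : ∀ v, 0 < p v) (hlam : ∀ v, 0 < lam v)
    (hβsum : ∑ v, β v = 1)
    (lamBar : ℝ) (hlamBar : lamBar = ∑ v, β v * lam v)
    (hpos : 0 < lamBar) (hsub : lamBar < Real.exp (-1))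
    (γlo γhi : ℝ)
    (hγlo_mem : γlo ∈ Set.Ioo (0:ℝ) 1) (hγlo_root : γlo * Real.exp (-γlo) = lamBar)
    (hγhi_mem : γhi ∈ Set.Ioi (1:ℝ)) (hγhi_root : γhi * Real.exp (-γhi) = lamBar)
    (hstab : ∀ v, lam v < p v * Real.exp (-γhi)) :
    (∀ γ ∈ ({γlo, γhi} : Set ℝ),
      (∀ v, lam v * Real.exp γ / p v ∈ Set.Ioo (0:ℝ) 1) ∧
      (∑ v, β v * p v * (1 - QeqAloha p lam γ v 0)) = γ ∧
      (∀ v, ∀ k : ℕ,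
        lam v * ((if k = 0 then 0 else QeqAloha p lam γ v (k-1)) - QeqAloha p lam γ v k)
          + p v * Real.exp (-γ) *
            (QeqAloha p lam γ v (k+1) - (if k = 0 then 0 else QeqAloha p lam γ v k)) = 0)) ∧
    QeqAloha p lam γlo ≠ QeqAloha p lam γhi := by
  have hlt : γlo < γhi := hγlo_mem.2.trans hγhi_mem
  have key : ∀ γ ∈ ({γlo, γhi} : Set ℝ), γ ≤ γhi ∧ γ * Real.exp (-γ) = lamBar := by
    rintro γ (rfl | rfl)
    · exact ⟨hlt.le, hγlo_root⟩
    · exact ⟨le_rfl, hγhi_root⟩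
  have hsum : ∀ γ ∈ ({γlo, γhi} : Set ℝ),
      (∑ v, β v * p v * (1 - QeqAloha p lam γ v 0)) = γ := by
    intro γ hγ
    calc (∑ v, β v * p v * (1 - QeqAloha p lam γ v 0))
        = ∑ v, β v * lam v * Real.exp γ := by
          refine Finset.sum_congr rfl fun v _ => ?_
          have := (hp v).ne'
          simp only [QeqAloha, pow_zero, mul_one]
          field_simp
          ring
      _ = lamBar * Real.exp γ := by rw [hlamBar, Finset.sum_mul]
      _ = γ := by
          rw [← (key γ hγ).2, mul_assoc, ← Real.exp_add, neg_add_cancel, Real.exp_zero, mul_one]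
  refine ⟨fun γ hγ => ⟨fun v => ⟨?_, ?_⟩, hsum γ hγ, fun v k => ?_⟩, fun h => ?_⟩
  · exact div_pos (mul_pos (hlam v) (Real.exp_pos γ)) (hp v)
  · rw [div_lt_one (hp v)]
    calc lam v * Real.exp γ < p v * Real.exp (-γhi) * Real.exp γ :=
          mul_lt_mul_of_pos_right (hstab v) (Real.exp_pos γ)
      _ = p v * Real.exp (γ - γhi) := by
          rw [mul_assoc, ← Real.exp_add, neg_add_eq_sub]
      _ ≤ p v * 1 := mul_le_mul_of_nonneg_left
          (Real.exp_le_one_iff.mpr (sub_nonpos.mpr (key γ hγ).1)) (hp v).le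
      _ = p v := mul_one _
  · -- Detailed balance: the service rate times the ratio is the arrival rate.
    have hbal : p v * Real.exp (-γ) * (lam v * Real.exp γ / p v) = lam v := by
      have := (hp v).ne'
      rw [Real.exp_neg]
      field_simp
    unfold QeqAloha
    generalize lam v * Real.exp γ / p v = r at hbal ⊢
    rw [← hbal]
    rcases k with _ | k
    · simp
      ring
    · simp only [Nat.add_eq_zero_iff, one_ne_zero, and_false, if_false, Nat.add_sub_cancel]
      ring
  · -- The family determines `γ` through the intensity identity.
    have h1 := hsum γlo (Or.inl rfl)
    rw [h, hsum γhi (Or.inr rfl)] at h1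
    exact hlt.ne' h1
end

section
/- Let p_1, p_2 ∈ (0,1) and λ = (λ_1, λ_2) with λ_1 > 0 and λ_2 > 0. Then λ ∈ Λ̂^2 if and only if either [λ_1 < p_1(1−p_2) and λ_2 < p_2(1 − λ_1/(1−p_2))] or [λ_2 < p_2(1−p_1) and λ_1 < p_1(1 − λ_2/(1−p_1))]. -/
/-!
If user 2 always transmits (`ρ₂ = 1`), write `x = ρ₁ p₁ ∈ [0, p₁]`. The boundary point is then
`(x (1 - p₂), p₂ (1 - x))`, and it dominates `(l₁, l₂)` strictly iff
`l₁ / (1 - p₂) < x` and `l₂ < p₂ (1 - x)`. The second bound is decreasing in `x`, so an admissible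
`x` exists iff both `x ≤ p₁` and the second bound leave room just above `l₁ / (1 - p₂)`, which gives
the first alternative (`exists_rho_iff`). The case `ρ₁ = 1` is the same with the users exchanged.
-/

open Filter Set Real

/-- `σ ∈ ∂_j Λ̂^N`: there is `ρ ∈ ∂_j[0,1]^N` (i.e. `ρ_i ∈ [0,1]`, `ρ_j = 1`)
with `σ_i = ρ_i p_i ∏_{k ≠ i} (1 − ρ_k p_k)` for every `i`. -/
def memPartialBoundary (N : ℕ) (p : Fin N → ℝ) (j : Fin N) (σ : Fin N → ℝ) : Prop :=
  ∃ ρ : Fin N → ℝ, (∀ i, ρ i ∈ Set.Icc (0:ℝ) 1) ∧ ρ j = 1 ∧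
    ∀ i, σ i = ρ i * p i * ∏ m ∈ Finset.univ.erase i, (1 - ρ m * p m)

/-- `λ ∈ Λ̂^N`: all `λ_i > 0` and there exist `j` and `σ ∈ ∂_j Λ̂^N` with
`λ_i < σ_i` for every `i`. -/
def memApproxRegion (N : ℕ) (p lam : Fin N → ℝ) : Prop :=
  (∀ i, 0 < lam i) ∧
  ∃ j : Fin N, ∃ σ : Fin N → ℝ, memPartialBoundary N p j σ ∧ ∀ i, lam i < σ i

/-- `ŝ*(α) = sup { s ≥ 0 : ∃ j, ∃ σ ∈ ∂_jΛ̂^N, ∀ i, s α_i < σ_i }`. -/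
noncomputable def sHatStar (N : ℕ) (p α : Fin N → ℝ) : ℝ :=
  sSup {s : ℝ | 0 ≤ s ∧ ∃ j : Fin N, ∃ σ : Fin N → ℝ,
    memPartialBoundary N p j σ ∧ ∀ i, s * α i < σ i}

/-- Elimination of the free coordinate `r` of the boundary face on which the user with
transmission probability `q` is always active. -/
lemma exists_rho_iff {p q a b : ℝ} (hp : 0 < p) (hq : q ∈ Set.Ioo (0:ℝ) 1) (ha : 0 < a) :
    (∃ r ∈ Set.Icc (0:ℝ) 1, a < r * p * (1 - q) ∧ b < q * (1 - r * p)) ↔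
      (a < p * (1 - q) ∧ b < q * (1 - a / (1 - q))) := by
  obtain ⟨hq0, hq1⟩ := hq
  have hq' : 0 < 1 - q := by linarith
  constructor
  · rintro ⟨r, ⟨-, hr1⟩, h1, h2⟩
    have hrp : r * p ≤ p := by nlinarith
    refine ⟨h1.trans_le (mul_le_mul_of_nonneg_right hrp hq'.le), h2.trans ?_⟩
    have hlt : a / (1 - q) < r * p := (div_lt_iff₀ hq').2 h1
    exact mul_lt_mul_of_pos_left (by linarith) hq0
  · rintro ⟨h1, h2⟩
    have hlt : a / (1 - q) < p := (div_lt_iff₀ hq').2 h1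
    have hb : a / (1 - q) < 1 - b / q := by
      have : b / q < 1 - a / (1 - q) := (div_lt_iff₀' hq0).2 h2
      linarith
    obtain ⟨x, hx, hx'⟩ := exists_between (lt_min hlt hb)
    obtain ⟨hxp, hxb⟩ := lt_min_iff.1 hx'
    have hx0 : 0 < x := (div_pos ha hq').trans hx
    refine ⟨x / p, ⟨by positivity, (div_le_one hp).2 hxp.le⟩, ?_⟩
    rw [div_mul_cancel₀ x hp.ne']
    exact ⟨(div_lt_iff₀ hq').1 hx, (div_lt_iff₀' hq0).1 (by linarith)⟩

/-- For two users, the approximate stability region `Λ̂²` coincides with the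
known exact stability region of slotted Aloha:
`λ ∈ Λ̂²` iff either `λ₁ < p₁(1−p₂)` and `λ₂ < p₂(1 − λ₁/(1−p₂))`, or
`λ₂ < p₂(1−p₁)` and `λ₁ < p₁(1 − λ₂/(1−p₁))`. -/
theorem approxRegion_two_users
    (p₁ p₂ l₁ l₂ : ℝ)
    (hp₁ : p₁ ∈ Set.Ioo (0:ℝ) 1) (hp₂ : p₂ ∈ Set.Ioo (0:ℝ) 1)
    (hl₁ : 0 < l₁) (hl₂ : 0 < l₂) :
    memApproxRegion 2 ![p₁, p₂] ![l₁, l₂] ↔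
      ((l₁ < p₁ * (1 - p₂) ∧ l₂ < p₂ * (1 - l₁ / (1 - p₂))) ∨
       (l₂ < p₂ * (1 - p₁) ∧ l₁ < p₁ * (1 - l₂ / (1 - p₁)))) := by
  rw [← exists_rho_iff hp₁.1 hp₂ hl₁, ← exists_rho_iff hp₂.1 hp₁ hl₂]
  have e0 : (Finset.univ.erase (0 : Fin 2)) = {1} := by decide
  have e1 : (Finset.univ.erase (1 : Fin 2)) = {0} := by decide
  constructor
  · rintro ⟨-, j, σ, ⟨ρ, hρ, hj, hσ⟩, hlt⟩
    have h0 := hlt 0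
    have h1 := hlt 1
    rw [hσ] at h0 h1
    simp only [e0, e1, Finset.prod_singleton, Matrix.cons_val_zero, Matrix.cons_val_one] at h0 h1
    fin_cases j
    · have hj' : ρ 0 = 1 := hj
      rw [hj', one_mul] at h0 h1
      exact Or.inr ⟨ρ 1, hρ 1, h1, h0⟩
    · have hj' : ρ 1 = 1 := hj
      rw [hj', one_mul] at h0 h1
      exact Or.inl ⟨ρ 0, hρ 0, h0, h1⟩
  · intro h
    refine ⟨by simp [Fin.forall_fin_two, hl₁, hl₂], ?_⟩
    rcases h with ⟨r, hr, h1, h2⟩ | ⟨r, hr, h2, h1⟩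
    · refine ⟨1, _, ⟨![r, 1], ?_, rfl, fun _ => rfl⟩, ?_⟩
      · simpa [Fin.forall_fin_two] using hr
      · simp [Fin.forall_fin_two, e0, e1, h1, h2]
    · refine ⟨0, _, ⟨![1, r], ?_, rfl, fun _ => rfl⟩, ?_⟩
      · simpa [Fin.forall_fin_two] using hr
      · simp [Fin.forall_fin_two, e0, e1, h1, h2]
end

section
/- Let N ≥ 1, let p_i ∈ (0,1) and α_i > 0 for 1 ≤ i ≤ N, let s > 0, and let ρ ∈ (0,1]^N satisfy α_i s = ρ_i p_i ∏_{j≠i}(1−ρ_j p_j) for every i. Suppose i* ∈ {1,…,N} satisfies ρ_{i*} = 1. Then for every i, ρ_i < 1 if and only if α_i(1−p_i)/p_i < α_{i*}(1−p_{i*})/p_{i*}. -/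
/-!
Write `Q = ∏ j, (1 - ρ j * p j) > 0`. Multiplying the `i`-th boundary equation by the missing factor
`1 - ρ i * p i` gives `α i * s * (1 - ρ i * p i) = ρ i * p i * Q`, hence
`α i * (1 - p i) / p i = (Q / s) * (ρ i * (1 - p i) / (1 - ρ i * p i))`.
The last factor equals `1` when `ρ i = 1`, and it is less than `1` exactly when
`ρ i - ρ i * p i < 1 - ρ i * p i`, that is, when `ρ i < 1`.
-/

/-- On the boundary of the approximate stability region, if `ρ_{i*} = 1`, then
for every `i`, `ρ_i < 1` iff `α_i(1−p_i)/p_i < α_{i*}(1−p_{i*})/p_{i*}`. -/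
theorem boundary_saturated_user
    (N : ℕ) (hN : 0 < N) (p α : Fin N → ℝ)
    (hp : ∀ i, p i ∈ Set.Ioo (0:ℝ) 1) (hα : ∀ i, 0 < α i)
    (s : ℝ) (hs : 0 < s)
    (ρ : Fin N → ℝ) (hρ : ∀ i, ρ i ∈ Set.Ioc (0:ℝ) 1)
    (heq : ∀ i, α i * s = ρ i * p i * ∏ j ∈ Finset.univ.erase i, (1 - ρ j * p j))
    (istar : Fin N) (histar : ρ istar = 1) :
    ∀ i, ρ i < 1 ↔
      α i * (1 - p i) / p i < α istar * (1 - p istar) / p istar := by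
  have hpos : ∀ i, 0 < 1 - ρ i * p i := fun i => by
    have h1 := (hp i).1
    have h2 := (hp i).2
    have h3 := (hρ i).2
    nlinarith
  set Q := ∏ j, (1 - ρ j * p j) with hQdef
  have hQ : 0 < Q := Finset.prod_pos fun j _ => hpos j
  have key : ∀ i, α i * (1 - p i) / p i = Q / s * (ρ i * (1 - p i) / (1 - ρ i * p i)) := by
    intro i
    have hmul : α i * s * (1 - ρ i * p i) = ρ i * p i * Q := by
      rw [hQdef, ← Finset.prod_erase_mul Finset.univ _ (Finset.mem_univ i), heq i]
      ring
    have hpi := (hp i).1.ne'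
    have hd := (hpos i).ne'
    have hs' := hs.ne'
    rw [div_mul_div_comm, div_eq_div_iff hpi (mul_ne_zero hs' hd)]
    linear_combination (1 - p i) * hmul
  have hstar : ρ istar * (1 - p istar) / (1 - ρ istar * p istar) = 1 := by
    rw [histar, one_mul, one_mul]
    exact div_self (sub_pos.mpr (hp istar).2).ne'
  intro i
  rw [key i, key istar, hstar, mul_lt_mul_iff_right₀ (div_pos hQ hs), div_lt_one (hpos i)]
  constructor <;> intro h <;> linarith
end

section
/- Let N ≥ 1, let p_i ∈ (0,1) and α_i > 0 for 1 ≤ i ≤ N with Σ_i α_i = 1, and let i* ∈ {1,…,N} satisfy α_i(1−p_i)/p_i ≤ α_{i*}(1−p_{i*})/p_{i*} for every i. Define ŝ* = (p_{i*}/α_{i*}) ∏_{i≠i*} [α_{i*}(1−p_{i*}) / (α_i p_{i*} + α_{i*}(1−p_{i*}))]. Then there exists ρ ∈ [0,1]^N with ρ_{i*} = 1 such that for every i, α_i ŝ* = ρ_i p_i ∏_{j≠i}(1−ρ_j p_j); one may take ρ_i p_i = α_i p_{i*} / (α_i p_{i*} + α_{i*}(1−p_{i*})). -/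
/-!
Write `q = p istar`, `c = α istar * (1 - q)`, `D j = α j * q + c` and `x j = α j * q / D j`, and
take `ρ j = x j / p j`. Then `1 - x j = c / D j`, so the odds `x j / (1 - x j) = α j * q / c` are
proportional to `α j`. Hence `x i * ∏_{j ≠ i} (1 - x j) = (α i * q / c) * ∏_j (1 - x j)`, which is
`α i` times a quantity independent of `i`; since `D istar = α istar`, this quantity is the
stated rate. The bound `ρ i ≤ 1` is the maximality of `istar` with denominators cleared.
-/


/-- Remark 1: if `i*` maximizes `α_i(1−p_i)/p_i`, then the maximum total rate
`ŝ* = (p_{i*}/α_{i*}) ∏_{i≠i*} [α_{i*}(1−p_{i*})/(α_i p_{i*} + α_{i*}(1−p_{i*}))]`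
is achieved on the boundary of the approximate stability region: there is
`ρ ∈ [0,1]^N` with `ρ_{i*} = 1`, given by
`ρ_i p_i = α_i p_{i*}/(α_i p_{i*} + α_{i*}(1−p_{i*}))`, such that
`α_i ŝ* = ρ_i p_i ∏_{j≠i}(1−ρ_j p_j)` for every `i`. -/
theorem maximal_rate_boundary_point
    (N : ℕ) (hN : 0 < N) (p α : Fin N → ℝ)
    (hp : ∀ i, p i ∈ Set.Ioo (0:ℝ) 1) (hα : ∀ i, 0 < α i)
    (hαsum : ∑ i, α i = 1)
    (istar : Fin N)
    (hmax : ∀ i, α i * (1 - p i) / p i ≤ α istar * (1 - p istar) / p istar) :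
    ∃ ρ : Fin N → ℝ,
      (∀ i, ρ i ∈ Set.Icc (0:ℝ) 1) ∧ ρ istar = 1 ∧
      (∀ i, ρ i * p i = α i * p istar / (α i * p istar + α istar * (1 - p istar))) ∧
      (∀ i, α i * ((p istar / α istar) *
          ∏ j ∈ Finset.univ.erase istar,
            (α istar * (1 - p istar) / (α j * p istar + α istar * (1 - p istar))))
        = ρ i * p i * ∏ j ∈ Finset.univ.erase i, (1 - ρ j * p j)) := by
  have hq := (hp istar).1
  have hc : 0 < α istar * (1 - p istar) := mul_pos (hα istar) (by linarith [(hp istar).2])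
  have hmax' : ∀ i, α i * (1 - p i) * p istar ≤ α istar * (1 - p istar) * p i := fun i =>
    (div_le_div_iff₀ (hp i).1 hq).1 (hmax i)
  have hDs : α istar * p istar + α istar * (1 - p istar) = α istar := by ring
  set q := p istar with hqdef
  set c := α istar * (1 - q) with hcdef
  have hD : ∀ j, 0 < α j * q + c := fun j => add_pos (mul_pos (hα j) hq) hc
  have hρ : ∀ i, α i * q / (α i * q + c) / p i * p i = α i * q / (α i * q + c) := fun i =>
    div_mul_cancel₀ _ (hp i).1.ne'
  refine ⟨fun i => α i * q / (α i * q + c) / p i, fun i => ⟨?_, ?_⟩, ?_, hρ, fun i => ?_⟩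
  · exact div_nonneg (div_nonneg (mul_pos (hα i) hq).le (hD i).le) (hp i).1.le
  · rw [div_le_one (hp i).1, div_le_iff₀ (hD i)]
    linarith [hmax' i]
  · have := (hα istar).ne'
    have := hq.ne'
    simp only [hDs, ← hqdef]
    field_simp
  · have hx : ∀ j, 1 - α j * q / (α j * q + c) = c / (α j * q + c) := fun j => by
      have := (hD j).ne'
      field_simp
      ring
    simp only [hρ, hx]
    -- Both punctured products are compared through the full product `∏_j c / D j`.
    have h1 := Finset.mul_prod_erase Finset.univ (fun j => c / (α j * q + c)) (Finset.mem_univ i)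
    have h2 := Finset.mul_prod_erase Finset.univ (fun j => c / (α j * q + c))
      (Finset.mem_univ istar)
    simp only [hDs] at h2
    refine mul_left_cancel₀ hc.ne' ?_
    calc c * (α i * (q / α istar * ∏ j ∈ Finset.univ.erase istar, c / (α j * q + c)))
        = α i * q * (c / α istar * ∏ j ∈ Finset.univ.erase istar, c / (α j * q + c)) := by ring
      _ = α i * q * (c / (α i * q + c) *
            ∏ j ∈ Finset.univ.erase i, c / (α j * q + c)) := by rw [h2, h1]
      _ = c * (α i * q / (α i * q + c) *
            ∏ j ∈ Finset.univ.erase i, c / (α j * q + c)) := by ring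
end

section
/- Let V ≥ 1 be finite, b ∈ (0,1], and for each v let β_v > 0 and p_v ∈ (0,1), with Σ_v β_v p_v < 1. Define Γ(b,V) = {λ ∈ ℝ^V : ∃ρ ∈ [0,1]^V, ∀v, λ_v = b ρ_v p_v e^{−Σ_u β_u ρ_u p_u}}. If λ ∈ Γ(b,V) and α ∈ ℝ^V satisfies 0 < α_v < λ_v for every v, then α ∈ Γ(b,V). -/
/-!
Summing the defining equations against `β` reduces the vector fixed-point problem to a scalar one:
with `s = ∑ u, β u * ρ u * p u`, membership of `α` forces `s * exp (-s) = (∑ v, β v * α v) / b`,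
and conversely a root `s` of this equation yields the solution `ρ v = α v * exp s / (b * p v)`.
If `S` is the load of the solution `ρ` for `λ`, then `S * exp (-S) = (∑ v, β v * λ v) / b`
dominates the right-hand side for `α`, so the intermediate value theorem gives a root `s ∈ [0, S]`.
From `s ≤ S` and `α v ≤ λ v`, the new activity factors are bounded by the old ones, hence by `1`.
-/

/-- Membership in the mean-field approximate stability region `Γ(b,V)`:
there is `ρ ∈ [0,1]^V` with `λ_v = b ρ_v p_v e^{−Σ_u β_u ρ_u p_u}` for all `v`. -/
def memGammaRegion {V : Type*} [Fintype V] (b : ℝ) (β p : V → ℝ) (lam : V → ℝ) : Prop :=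
  ∃ ρ : V → ℝ, (∀ v, ρ v ∈ Set.Icc (0:ℝ) 1) ∧
    ∀ v, lam v = b * ρ v * p v * Real.exp (-(∑ u, β u * ρ u * p u))

/-- `Γ(b,V)` is downward closed (on positive vectors): if `λ ∈ Γ(b,V)` and
`0 < α_v < λ_v` for every `v`, then `α ∈ Γ(b,V)`. -/
theorem gammaRegion_downward_closed
    {V : Type*} [Fintype V] [Nonempty V]
    (b : ℝ) (hb : b ∈ Set.Ioc (0:ℝ) 1)
    (β p : V → ℝ) (hβ : ∀ v, 0 < β v) (hp : ∀ v, p v ∈ Set.Ioo (0:ℝ) 1)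
    (hζ : ∑ v, β v * p v < 1)
    (lam α : V → ℝ)
    (hlam : memGammaRegion b β p lam)
    (hα : ∀ v, 0 < α v ∧ α v < lam v) :
    memGammaRegion b β p α := by
  obtain ⟨ρ, hρ, hl⟩ := hlam
  have hb0 : 0 < b := hb.1
  have hp0 : ∀ v, 0 < p v := fun v => (hp v).1
  set S := ∑ u, β u * ρ u * p u with hS
  have hS0 : 0 ≤ S := Finset.sum_nonneg fun u _ =>
    mul_nonneg (mul_nonneg (hβ u).le (hρ u).1) (hp0 u).le
  set A := ∑ v, β v * (α v / b) with hA
  have hA0 : 0 ≤ A := Finset.sum_nonneg fun u _ =>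
    mul_nonneg (hβ u).le (div_nonneg (hα u).1.le hb0.le)
  have hAS : A ≤ S * Real.exp (-S) := by
    rw [hA]
    nth_rewrite 1 [hS]
    rw [Finset.sum_mul]
    refine Finset.sum_le_sum fun v _ => ?_
    have h : α v / b ≤ ρ v * p v * Real.exp (-S) := by
      rw [div_le_iff₀ hb0]
      linarith [(hα v).2, hl v]
    calc β v * (α v / b) ≤ β v * (ρ v * p v * Real.exp (-S)) :=
          mul_le_mul_of_nonneg_left h (hβ v).le
      _ = β v * ρ v * p v * Real.exp (-S) := by ring
  have hcont : ContinuousOn (fun s : ℝ => s * Real.exp (-s)) (Set.Icc 0 S) := by fun_prop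
  obtain ⟨s, ⟨-, hsS⟩, hs⟩ :=
    intermediate_value_Icc hS0 hcont (show A ∈ Set.Icc _ _ from ⟨by simpa using hA0, hAS⟩)
  have hs : s * Real.exp (-s) = A := hs
  have hee : Real.exp s * Real.exp (-s) = 1 := by rw [← Real.exp_add]; simp
  have hsum : ∑ u, β u * (α u * Real.exp s / (b * p u)) * p u = s := by
    calc ∑ u, β u * (α u * Real.exp s / (b * p u)) * p u = A * Real.exp s := by
          rw [hA, Finset.sum_mul]
          refine Finset.sum_congr rfl fun u _ => ?_
          have := (hp0 u).ne'
          field_simp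
      _ = s := by rw [← hs, mul_assoc, mul_comm (Real.exp (-s)), hee, mul_one]
  refine ⟨fun v => α v * Real.exp s / (b * p v), fun v => ⟨?_, ?_⟩, fun v => ?_⟩
  · have := hp0 v
    have := (hα v).1
    positivity
  · have hbp : 0 < b * p v := mul_pos hb0 (hp0 v)
    refine le_trans ?_ (hρ v).2
    rw [div_le_iff₀ hbp]
    have hEE : Real.exp (-S) * Real.exp S = 1 := by rw [← Real.exp_add]; simp
    calc α v * Real.exp s ≤ lam v * Real.exp S :=
          mul_le_mul (hα v).2.le (Real.exp_le_exp.2 hsS) (Real.exp_pos _).le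
            ((hα v).1.trans (hα v).2).le
      _ = ρ v * (b * p v) := by
          rw [hl v, mul_assoc, hEE]; ring
  · simp only [hsum]
    have := (hp0 v).ne'
    calc α v = α v * (Real.exp s * Real.exp (-s)) := by rw [hee, mul_one]
      _ = _ := by field_simp
end

section
/- Let V ≥ 1 be finite, b > 0, and for each v let β_v > 0 and p_v ∈ (0,1), with Σ_v β_v p_v < 1. Define f : ℝ^V → ℝ^V by f(g)_v = b g_v e^{−Σ_u β_u g_u}. Then f is injective on the box P = ∏_v [0, p_v]: if g, g' ∈ P and f(g) = f(g'), then g = g'. -/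
/-!
Write `S = ∑ u, β u * g u` and `S' = ∑ u, β u * g' u`. Weighting the hypothesis by `β` and summing
gives `S * exp (-S) = S' * exp (-S')`. Both sums lie in `[0, 1)`, where `x ↦ x * exp (-x)` is
injective, so `S = S'`; the exponential factors then agree and cancel coordinatewise.
-/

/-- One half of the injectivity of `x ↦ x * exp (-x)` on `[0, 1)`: as `x = y * exp (x - y)`, the
bound `1 + t ≤ exp t` gives `(x - y) * (1 - y) ≥ 0`. -/
lemma le_of_mul_exp_neg_eq {x y : ℝ} (hy0 : 0 ≤ y) (hy1 : y < 1)
    (h : x * Real.exp (-x) = y * Real.exp (-y)) : y ≤ x := by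
  have hx : x = y * Real.exp (x - y) := by
    calc x = x * Real.exp (-x) * Real.exp x := by
          rw [mul_assoc, ← Real.exp_add]; simp
      _ = y * Real.exp (x - y) := by
          rw [h, mul_assoc, ← Real.exp_add]; ring_nf
  have hle := mul_le_mul_of_nonneg_left (Real.add_one_le_exp (x - y)) hy0
  nlinarith

/-- The map `f(g)_v = b g_v e^{−Σ_u β_u g_u}` is injective on the box
`P = ∏_v [0, p_v]`, when `Σ_v β_v p_v < 1`. -/
theorem meanfield_map_injective_on_box
    {V : Type*} [Fintype V] [Nonempty V]
    (b : ℝ) (hb : 0 < b)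
    (β p : V → ℝ) (hβ : ∀ v, 0 < β v) (hp : ∀ v, p v ∈ Set.Ioo (0:ℝ) 1)
    (hζ : ∑ v, β v * p v < 1)
    (g g' : V → ℝ)
    (hg : ∀ v, g v ∈ Set.Icc (0:ℝ) (p v)) (hg' : ∀ v, g' v ∈ Set.Icc (0:ℝ) (p v))
    (hfg : (fun v => b * g v * Real.exp (-(∑ u, β u * g u))) =
           (fun v => b * g' v * Real.exp (-(∑ u, β u * g' u)))) :
    g = g' := by
  have mem : ∀ k : V → ℝ, (∀ v, k v ∈ Set.Icc (0:ℝ) (p v)) →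
      0 ≤ ∑ u, β u * k u ∧ ∑ u, β u * k u < 1 := fun k hk =>
    ⟨Finset.sum_nonneg fun v _ => mul_nonneg (hβ v).le (hk v).1,
      (Finset.sum_le_sum fun v _ => mul_le_mul_of_nonneg_left (hk v).2 (hβ v).le).trans_lt hζ⟩
  have hcoord : ∀ v, g v * Real.exp (-(∑ u, β u * g u)) =
      g' v * Real.exp (-(∑ u, β u * g' u)) := fun v => by
    have h := congrFun hfg v
    simp only [mul_assoc] at h
    exact mul_left_cancel₀ hb.ne' h
  have hsum : (∑ u, β u * g u) * Real.exp (-(∑ u, β u * g u)) =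
      (∑ u, β u * g' u) * Real.exp (-(∑ u, β u * g' u)) := by
    rw [Finset.sum_mul, Finset.sum_mul]
    refine Finset.sum_congr rfl fun v _ => ?_
    rw [mul_assoc, mul_assoc, hcoord v]
  have hS : ∑ u, β u * g u = ∑ u, β u * g' u :=
    le_antisymm (le_of_mul_exp_neg_eq (mem g hg).1 (mem g hg).2 hsum.symm)
      (le_of_mul_exp_neg_eq (mem g' hg').1 (mem g' hg').2 hsum)
  funext v
  have h := hcoord v
  rw [hS] at h
  exact mul_right_cancel₀ (Real.exp_pos _).ne' h
end

section
/- Let N = 3, p_1 = p_2 = p_3 = 1/3, and for x ≥ 1 let α be the normalization of the vector (1, (1+1/x)/2, 1/x), i.e., α = (2x, x+1, 2)/(3x+3). Then ŝ*(α) = 4x(x+1)/((2x+1)(5x+1)). -/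
/-!
Pass to the odds `r_i = q_i / (1 - q_i)`, where `q_i = ρ_i / 3`. The cube `ρ ∈ [0,1]³` becomes
`r ∈ [0,1/2]³`, and the rates become `σ_i = r_i / ∏ (1 + r_k)`. Along the direction
`a = (1, b, c)` with `c = 1/x` and `b = (1 + c)/2`, the boundary point `r = a/2` gives exactly the
claimed value.

For optimality, suppose `t a_i < σ_i` for all `i`, and put `D = ∏ (1 + r_k)`, `u = t D`. Then
`u a_i < r_i`, so `u < 1/2` and `P(u) := ∏ (1 + u a_i) ≤ D`. Since `P(u)/u` is
nonincreasing on `(0, 1/2]` when all `a_i ∈ [0,1]` (its logarithmic derivative has the sign of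
`∑ u a_i / (1 + u a_i) - 1 ≤ 0`), `2 u P(1/2) ≤ P(u) ≤ D`, that is, `2 t P(1/2) ≤ 1` because `u = t D`.
This bound on `t` is the bound claimed for `s` (`rate_bound`).
-/

open Filter Set Real

/-- The inequality `P(1/2) / (1/2) ≤ P(u) / u` for `P(u) = (1 + u)(1 + u b)(1 + u c)`,
without division. -/
lemma odds_product_bound {b c u : ℝ} (hb : 0 ≤ b) (hb1 : b ≤ 1) (hc : 0 ≤ c) (hc1 : c ≤ 1)
    (hu : 0 ≤ u) (hu1 : u ≤ 1/2) :
    2 * u * ((1 + 1/2) * (1 + b/2) * (1 + c/2)) ≤ (1 + u) * (1 + u*b) * (1 + u*c) := by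
  have hbc : b * c ≤ 1 := mul_le_one₀ hb1 hc hc1
  have hbc0 : 0 ≤ b * c := mul_nonneg hb hc
  have h1 : (b + c + b*c) * u ≤ 3 * (1/2) := mul_le_mul (by linarith) hu1 hu (by norm_num)
  have h2 : u * (1 + 2*u) ≤ 1/2 * 2 := mul_le_mul hu1 (by linarith) (by linarith) (by norm_num)
  have h3 : (b*c) * (u * (1 + 2*u)) ≤ 1 * (1/2 * 2) :=
    mul_le_mul hbc h2 (mul_nonneg hu (by linarith)) (by norm_num)
  -- The difference of the two sides vanishes at `u = 1/2`; the cofactor is nonnegative.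
  have h4 : 0 ≤ (1 - 2*u) * (1 - (b + c + b*c) * u / 2 - (b*c) * (u * (1 + 2*u)) / 4) :=
    mul_nonneg (by linarith) (by linarith)
  linarith [h4]

/-- The optimality bound: a rate vector `t (1, b, c)` dominated by a point of the region with
attempt probabilities `q₀, q₁, q₂`, where `q₀ ≤ 1/3`, satisfies `2 t P(1/2) ≤ 1`. -/
lemma rate_bound {b c t q₀ q₁ q₂ : ℝ} (hb : 0 ≤ b) (hb1 : b ≤ 1) (hc : 0 ≤ c) (hc1 : c ≤ 1)
    (ht : 0 ≤ t) (h₀ : q₀ ≤ 1/3) (h₁ : q₁ ≤ 1/3) (h₂ : q₂ ≤ 1/3)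
    (e₀ : t < q₀ * ((1 - q₁) * (1 - q₂)))
    (e₁ : t * b < q₁ * ((1 - q₀) * (1 - q₂)))
    (e₂ : t * c < q₂ * ((1 - q₀) * (1 - q₁))) :
    2 * t * ((1 + 1/2) * (1 + b/2) * (1 + c/2)) ≤ 1 := by
  have p₀ : 0 < 1 - q₀ := by linarith
  have p₁ : 0 < 1 - q₁ := by linarith
  have p₂ : 0 < 1 - q₂ := by linarith
  set E := (1 - q₀) * (1 - q₁) * (1 - q₂) with hE
  have pE : 0 < E := by positivity
  have hu : 0 ≤ t / E := by positivity
  have hu₀ : 1 + t / E ≤ 1 / (1 - q₀) := by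
    have : t / E ≤ q₀ / (1 - q₀) := by
      rw [div_le_div_iff₀ pE p₀, hE]
      linarith [mul_le_mul_of_nonneg_right e₀.le p₀.le]
    have h : 1 / (1 - q₀) = 1 + q₀ / (1 - q₀) := by field_simp; ring
    linarith
  have hu₁ : 1 + t / E * b ≤ 1 / (1 - q₁) := by
    have : t / E * b ≤ q₁ / (1 - q₁) := by
      rw [div_mul_eq_mul_div, div_le_div_iff₀ pE p₁, hE]
      linarith [mul_le_mul_of_nonneg_right e₁.le p₁.le]
    have h : 1 / (1 - q₁) = 1 + q₁ / (1 - q₁) := by field_simp; ring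
    linarith
  have hu₂ : 1 + t / E * c ≤ 1 / (1 - q₂) := by
    have : t / E * c ≤ q₂ / (1 - q₂) := by
      rw [div_mul_eq_mul_div, div_le_div_iff₀ pE p₂, hE]
      linarith [mul_le_mul_of_nonneg_right e₂.le p₂.le]
    have h : 1 / (1 - q₂) = 1 + q₂ / (1 - q₂) := by field_simp; ring
    linarith
  have hhalf : t / E ≤ 1/2 := by
    have : 1 / (1 - q₀) ≤ 3/2 := by
      rw [div_le_div_iff₀ p₀ (by norm_num)]; linarith
    linarith
  have hP := odds_product_bound hb hb1 hc hc1 hu hhalf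
  have hD : (1 + t/E) * (1 + t/E*b) * (1 + t/E*c)
      ≤ 1 / (1 - q₀) * (1 / (1 - q₁)) * (1 / (1 - q₂)) := by
    gcongr
  have hDE : 1 / (1 - q₀) * (1 / (1 - q₁)) * (1 / (1 - q₂)) = 1 / E := by
    rw [hE]; field_simp
  rw [hDE] at hD
  have h := mul_le_mul_of_nonneg_right (hP.trans hD) pE.le
  rw [one_div_mul_cancel pE.ne'] at h
  calc 2 * t * ((1 + 1/2) * (1 + b/2) * (1 + c/2))
      = 2 * (t/E) * ((1 + 1/2) * (1 + b/2) * (1 + c/2)) * E := by field_simp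
    _ ≤ 1 := h

lemma erase_zero : (Finset.univ : Finset (Fin 3)).erase 0 = {1, 2} := by decide
lemma erase_one : (Finset.univ : Finset (Fin 3)).erase 1 = {0, 2} := by decide
lemma erase_two : (Finset.univ : Finset (Fin 3)).erase 2 = {0, 1} := by decide

/-- Example 1: for `N = 3` users each transmitting with probability `1/3` and
traffic direction `α ∝ (1, (1+1/x)/2, 1/x)`, i.e.
`α = (2x, x+1, 2)/(3x+3)`, the maximal stable total rate is
`ŝ*(α) = 4x(x+1)/((2x+1)(5x+1))`. -/
theorem example_three_users (x : ℝ) (hx : 1 ≤ x) :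
    sHatStar 3 (fun _ => 1/3)
        ![2*x/(3*x+3), (x+1)/(3*x+3), 2/(3*x+3)] =
      4*x*(x+1) / ((2*x+1)*(5*x+1)) := by
  have x0 : 0 < x := by linarith
  have hS : 0 < 4*x*(x+1) / ((2*x+1)*(5*x+1)) := by positivity
  -- Every nonnegative rate strictly below the claimed value is attained strictly.
  have hmem : ∀ s, 0 ≤ s → s < 4*x*(x+1) / ((2*x+1)*(5*x+1)) →
      s ∈ {s : ℝ | 0 ≤ s ∧ ∃ j : Fin 3, ∃ σ : Fin 3 → ℝ,
        memPartialBoundary 3 (fun _ => 1/3) j σ ∧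
        ∀ i, s * ![2*x/(3*x+3), (x+1)/(3*x+3), 2/(3*x+3)] i < σ i} := by
    intro s hs hlt
    -- The odds `(1/2, (1 + 1/x)/4, 1/(2x))` correspond to these values of `ρ`.
    refine ⟨hs, 0, _, ⟨![1, 3*(x+1)/(5*x+1), 3/(2*x+1)], ?_, rfl, fun i => rfl⟩, ?_⟩
    · have h1 : 3*(x+1)/(5*x+1) ≤ 1 := by rw [div_le_one (by positivity)]; linarith
      have h2 : 3/(2*x+1) ≤ 1 := by rw [div_le_one (by positivity)]; linarith
      intro i
      fin_cases i
      · simp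
      · exact ⟨by simp; positivity, by simpa using h1⟩
      · exact ⟨by simp; positivity, by simpa using h2⟩
    · intro i
      have hα : 0 < ![2*x/(3*x+3), (x+1)/(3*x+3), 2/(3*x+3)] i := by
        fin_cases i <;> simp <;> positivity
      refine (mul_lt_mul_of_pos_right hlt hα).trans_eq ?_
      fin_cases i
      · simp [erase_zero]; field_simp; ring
      · simp [erase_one]; field_simp; ring
      · simp [erase_two]; field_simp; ring
  unfold sHatStar
  apply csSup_eq_of_forall_le_of_forall_lt_exists_gt
  · exact ⟨0, hmem 0 le_rfl hS⟩
  · rintro s ⟨hs, j, σ, ⟨ρ, hρ, -, hσ⟩, hlt⟩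
    have e₀ := hlt 0
    have e₁ := hlt 1
    have e₂ := hlt 2
    rw [hσ] at e₀ e₁ e₂
    simp [erase_zero, erase_one, erase_two] at e₀ e₁ e₂
    have hxi : 1 / x ≤ 1 := by rw [div_le_one x0]; exact hx
    have hxi0 : 0 < 1 / x := by positivity
    have key := rate_bound (b := (1 + 1/x)/2) (c := 1/x) (t := s * (2*x/(3*x+3)))
      (q₀ := ρ 0 * 3⁻¹) (q₁ := ρ 1 * 3⁻¹) (q₂ := ρ 2 * 3⁻¹)
      (by positivity) (by linarith) hxi0.le hxi (by positivity)
      (by linarith [(hρ 0).2]) (by linarith [(hρ 1).2]) (by linarith [(hρ 2).2])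
      e₀
      (by refine lt_of_eq_of_lt ?_ e₁; field_simp)
      (by refine lt_of_eq_of_lt ?_ e₂; field_simp)
    have heq : 2 * (s * (2*x/(3*x+3))) * ((1 + 1/2) * (1 + (1 + 1/x)/2/2) * (1 + 1/x/2))
        = s * ((2*x+1)*(5*x+1)) / (4*x*(x+1)) := by
      field_simp; ring
    rw [heq, div_le_one (by positivity)] at key
    rwa [le_div_iff₀ (by positivity)]
  · intro w hw
    obtain ⟨s, hs1, hs2⟩ := exists_between (max_lt hw hS)
    exact ⟨s, hmem s ((le_max_right _ _).trans hs1.le) hs2, (le_max_left _ _).trans_lt hs1⟩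
end
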